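/- arXiv:2305.13027 — 2 statements merged into one kernel-verified Lean document; each statement's English description precedes it below -/
import Mathlib

section
/- Let x : Fin 11 → ℝ^10 be a regular 11-simplex, C1 = {x 0, …, x 10}, let C2 be a clique of order 10 in the graph on Y1, and let Z = Z1 ∪ Z2 be the splitting of Z into two 45-element parts with all inner products within each part in {α1, α2, α3} and all inner products between the parts outside {α1, α2, α3}. Then there exists a bijection f from C1 ∪ C2 ∪ Z1 onto C1 ∪ C2 ∪ Z2 preserving all inner products; equivalently, the Gram matrices of C1 ∪ C2 ∪ Z1 and C1 ∪ C2 ∪ Z2 are permutationally equivalent. -/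
open RealInnerProductSpace

noncomputable section

/-- The three admissible inner product values (angles). -/
def α1 : ℝ := 4/15
def α2 : ℝ := -1/10
def α3 : ℝ := -7/15

/-- A regular 11-simplex in ℝ^10: eleven unit vectors with pairwise inner
products equal to -1/10. -/
def IsRegularSimplex (x : Fin 11 → EuclideanSpace ℝ (Fin 10)) : Prop :=
  (∀ i, ‖x i‖ = 1) ∧ ∀ i j : Fin 11, i ≠ j → ⟪x i, x j⟫ = -1/10

/-- The set `Y1`: unit vectors `y` with `⟪x 0, y⟫ = α2` such that among the
indices `i ≠ 0`, exactly six satisfy `⟪x i, y⟫ = α1`, exactly one satisfies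
`⟪x i, y⟫ = α2`, and exactly three satisfy `⟪x i, y⟫ = α3`. -/
def Y1set (x : Fin 11 → EuclideanSpace ℝ (Fin 10)) : Set (EuclideanSpace ℝ (Fin 10)) :=
  {y | ‖y‖ = 1 ∧ ⟪x 0, y⟫ = α2 ∧
    {i : Fin 11 | i ≠ 0 ∧ ⟪x i, y⟫ = α1}.ncard = 6 ∧
    {i : Fin 11 | i ≠ 0 ∧ ⟪x i, y⟫ = α2}.ncard = 1 ∧
    {i : Fin 11 | i ≠ 0 ∧ ⟪x i, y⟫ = α3}.ncard = 3}

/-- A clique of order 10 in the graph on `Y1` in which two distinct vectors are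
adjacent iff their inner product equals `α2`. -/
def IsClique10 (x : Fin 11 → EuclideanSpace ℝ (Fin 10))
    (D : Set (EuclideanSpace ℝ (Fin 10))) : Prop :=
  D ⊆ Y1set x ∧ D.ncard = 10 ∧
    ∀ y ∈ D, ∀ y' ∈ D, y ≠ y' → ⟪y, y'⟫ = α2

/-- The set `Y`: unit vectors `u ∉ C2` whose inner products with
`x 0, …, x 10` take the value `α1` exactly six times, `α2` exactly twice, and
`α3` exactly three times. -/
def Yset (x : Fin 11 → EuclideanSpace ℝ (Fin 10))
    (C2 : Set (EuclideanSpace ℝ (Fin 10))) : Set (EuclideanSpace ℝ (Fin 10)) :=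
  {u | ‖u‖ = 1 ∧ u ∉ C2 ∧
    {i : Fin 11 | ⟪x i, u⟫ = α1}.ncard = 6 ∧
    {i : Fin 11 | ⟪x i, u⟫ = α2}.ncard = 2 ∧
    {i : Fin 11 | ⟪x i, u⟫ = α3}.ncard = 3}

/-- The set `Z`: vectors of `Y` whose inner products with all vectors of `C2`
lie in `{α1, α2, α3}`. -/
def Zset (x : Fin 11 → EuclideanSpace ℝ (Fin 10))
    (C2 : Set (EuclideanSpace ℝ (Fin 10))) : Set (EuclideanSpace ℝ (Fin 10)) :=
  {u ∈ Yset x C2 | ∀ w ∈ C2, ⟪u, w⟫ ∈ ({α1, α2, α3} : Set ℝ)}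

/-!
Up to an affine change of scale, the inner products of an admissible vector with the vertices of a
regular simplex form a `{0, 1, -1}`-vector with two zeros, its code. The clique together with the
base vertex is a second regular simplex, and the codes of the clique form a bordered conference
matrix. A congruence modulo `4` shows that this matrix is symmetric, so the isometry `T` carrying
the first simplex to the second is an involution and preserves `C1 ∪ C2` and `Z`. The same
congruence applied to `u ∈ Z` shows that the codes of `u` and `T u` have dot product `1`, which
makes `⟪u, T u⟫` inadmissible. Hence `T` moves every vector of `Z1` to `Z2` and vice versa.
-/

open Module
open scoped Matrix

section Signs

variable {ι : Type*}

/-- A `{0, 1, -1}`-vector with zero set `s`, the shape of the code of an admissible vector. -/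
structure IsSignVector (t : ι → ℤ) (s : Finset ι) : Prop where
  eq_zero : ∀ k ∈ s, t k = 0
  isUnit : ∀ k ∉ s, IsUnit (t k)

lemma exists_isSignVector [Finite ι] {t : ι → ℤ} (ht : ∀ k, |t k| ≤ 1) :
    ∃ s, IsSignVector t s := by
  refine ⟨(Set.toFinite {k | t k = 0}).toFinset, by simp, fun k hk => ?_⟩
  rw [Int.isUnit_iff]
  exact (Int.abs_le_one_iff.1 (ht k)).resolve_left (by simpa using hk)

lemma odd_of_isUnit {n : ℤ} (hn : IsUnit n) : Odd n := by
  rcases Int.isUnit_iff.1 hn with rfl | rfl <;> decide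

lemma mul_eq_neg_one_of_four_dvd {a b c d e : ℤ} (ha : IsUnit a) (hb : IsUnit b) (hc : IsUnit c)
    (hd : IsUnit d) (he : IsUnit e) (h : 4 ∣ a + b + c + d + e + 1) : a * b * c * d * e = -1 := by
  rcases Int.isUnit_iff.1 ha with rfl | rfl <;> rcases Int.isUnit_iff.1 hb with rfl | rfl <;>
    rcases Int.isUnit_iff.1 hc with rfl | rfl <;> rcases Int.isUnit_iff.1 hd with rfl | rfl <;>
    rcases Int.isUnit_iff.1 he with rfl | rfl <;> revert h <;> decide

lemma exists_isUnit_four_dvd_sub {n : ℤ} (hn : Odd n) : ∃ χ : ℤ, IsUnit χ ∧ 4 ∣ n - χ := by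
  obtain ⟨r, rfl⟩ := hn
  obtain ⟨q, rfl | rfl⟩ := Int.even_or_odd' r
  · exact ⟨1, isUnit_one, by omega⟩
  · exact ⟨-1, isUnit_one.neg, by omega⟩

namespace IsSignVector

variable {t t' : ι → ℤ} {s : Finset ι}

lemma eq_zero_iff (ht : IsSignVector t s) {k : ι} : t k = 0 ↔ k ∈ s :=
  ⟨fun h => by_contra fun hk => (ht.isUnit k hk).ne_zero h, ht.eq_zero k⟩

lemma odd (ht : IsSignVector t s) {k : ι} (hk : k ∉ s) : Odd (t k) :=
  odd_of_isUnit (ht.isUnit k hk)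

variable [Fintype ι]

lemma card_add_dotProduct_self (ht : IsSignVector t s) : s.card + t ⬝ᵥ t = Fintype.card ι := by
  classical
  have hsq : ∀ k, t k * t k = 1 - if k ∈ s then 1 else 0 := fun k => by
    by_cases hk : k ∈ s
    · simp [hk, ht.eq_zero k hk]
    · simp [hk, Int.isUnit_mul_self (ht.isUnit k hk)]
  simp [dotProduct, hsq]

lemma sum_eq_ncard_sub_ncard (ht : IsSignVector t s) :
    ∑ k, t k = {k | t k = 1}.ncard - {k | t k = -1}.ncard := by
  classical
  have hpoint : ∀ k, t k = (if t k = 1 then 1 else 0) - if t k = -1 then 1 else 0 := fun k => by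
    by_cases hk : k ∈ s
    · simp [ht.eq_zero k hk]
    · rcases Int.isUnit_iff.1 (ht.isUnit k hk) with h | h <;> simp [h]
  rw [Finset.sum_congr rfl fun k _ => hpoint k]
  simp [Finset.sum_sub_distrib, Set.ncard_eq_toFinset_card']

lemma dotProduct_self_eq_ncard_add_ncard (ht : IsSignVector t s) :
    t ⬝ᵥ t = {k | t k = 1}.ncard + {k | t k = -1}.ncard := by
  classical
  have hpoint : ∀ k, t k * t k = (if t k = 1 then 1 else 0) + if t k = -1 then 1 else 0 :=
    fun k => by
      by_cases hk : k ∈ s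
      · simp [ht.eq_zero k hk]
      · rcases Int.isUnit_iff.1 (ht.isUnit k hk) with h | h <;> simp [h]
  simp [dotProduct, hpoint, Finset.sum_add_distrib, Set.ncard_eq_toFinset_card']

lemma dotProduct_modEq_dotProduct_self (ht : IsSignVector t s) (ht' : IsSignVector t' s) :
    t ⬝ᵥ t' ≡ t ⬝ᵥ t [ZMOD 2] := by
  refine Int.ModEq.sum fun k _ => (Int.ModEq.refl (t k)).mul ?_
  by_cases hk : k ∈ s
  · rw [ht.eq_zero k hk, ht'.eq_zero k hk]
  · exact Int.modEq_iff_dvd.2 ((ht.odd hk).sub_odd (ht'.odd hk)).two_dvd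

end IsSignVector

/-- Only the indices in `s` matter, as `(a - 1) * (b - 1)` is divisible by `4` for odd `a`, `b`. -/
lemma dotProduct_add_one_modEq_four [Fintype ι] {m : ℕ} (hm : Odd m)
    (hι : Fintype.card ι = m ^ 2 + 2) {a b : ι → ℤ} (ha : ∑ k, a k = m) (hb : ∑ k, b k = m)
    {s : Finset ι} (hodd : ∀ k ∉ s, Odd (a k) ∧ Odd (b k)) :
    a ⬝ᵥ b + 1 ≡ ∑ k ∈ s, (a k - 1) * (b k - 1) [ZMOD 4] := by
  classical
  have hcompl : 4 ∣ ∑ k ∈ sᶜ, (a k - 1) * (b k - 1) := by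
    refine Finset.dvd_sum fun k hk => ?_
    obtain ⟨hak, hbk⟩ := hodd k (by simpa using hk)
    exact mul_dvd_mul (hak.sub_odd odd_one).two_dvd (hbk.sub_odd odd_one).two_dvd
  have hexpand : ∑ k, (a k - 1) * (b k - 1) = a ⬝ᵥ b - 2 * m + m ^ 2 + 2 := by
    have hmul : ∀ k, (a k - 1) * (b k - 1) = a k * b k - a k - b k + 1 := fun k => by ring
    simp only [hmul, Finset.sum_add_distrib, Finset.sum_sub_distrib, ha, hb, dotProduct,
      Finset.sum_const, Finset.card_univ, hι, nsmul_eq_mul]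
    push_cast
    ring
  have hsq : (m : ℤ) ^ 2 % 4 = 1 := Int.sq_mod_four_eq_one_of_odd (by exact_mod_cast hm)
  obtain ⟨r, rfl⟩ := hm
  have hsplit := Finset.sum_add_sum_compl s fun k => (a k - 1) * (b k - 1)
  rw [Int.modEq_iff_dvd]
  push_cast at *
  omega

end Signs

section Conference

variable {ι : Type*} [Fintype ι] [DecidableEq ι] {m : ℕ} {o : ι} {σ : ι → ι → ℤ} {t τ : ι → ℤ}

/-- Deleting the index `o` from `σ` leaves a conference matrix of order `card ι - 1` with constant
row sum `m`; the rows `σ j` with `j ≠ o` are bordered by a zero at `o`, and the row `σ o` is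
arbitrary. The codes of a clique form such a matrix. -/
structure IsBorderedConference (m : ℕ) (o : ι) (σ : ι → ι → ℤ) : Prop where
  isSignVector : ∀ j ≠ o, IsSignVector (σ j) {o, j}
  sum_eq : ∀ j ≠ o, ∑ k, σ j k = m
  dotProduct_eq_zero : ∀ i ≠ o, ∀ j ≠ o, i ≠ j → σ i ⬝ᵥ σ j = 0

namespace IsBorderedConference

lemma symm (hσ : IsBorderedConference m o σ) (hm : Odd m) (hι : Fintype.card ι = m ^ 2 + 2)
    {i j : ι} (hi : i ≠ o) (hj : j ≠ o) : σ i j = σ j i := by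
  rcases eq_or_ne i j with rfl | hij
  · rfl
  have hσi := hσ.isSignVector i hi
  have hσj := hσ.isSignVector j hj
  have hmod := dotProduct_add_one_modEq_four hm hι (hσ.sum_eq i hi) (hσ.sum_eq j hj)
    (s := {o, i, j}) fun k hk => by
      simp only [Finset.mem_insert, Finset.mem_singleton, not_or] at hk
      exact ⟨hσi.odd (by simp [hk]), hσj.odd (by simp [hk])⟩
  rw [hσ.dotProduct_eq_zero i hi j hj hij, Finset.sum_insert (by simp [hi.symm, hj.symm]),
    Finset.sum_pair hij, hσi.eq_zero o (by simp), hσi.eq_zero i (by simp),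
    hσj.eq_zero o (by simp), hσj.eq_zero j (by simp), Int.modEq_iff_dvd] at hmod
  rcases Int.isUnit_iff.1 (hσi.isUnit j (by simp [hj, hij.symm])) with h | h <;>
    rcases Int.isUnit_iff.1 (hσj.isUnit i (by simp [hi, hij])) with h' | h' <;> omega

lemma eq_zero_of_border_zero (hσ : IsBorderedConference m o σ) (hm : Odd m)
    (hι : Fintype.card ι = m ^ 2 + 2) {j : ι} (hj : j ≠ o) (ht : IsSignVector t {o, j})
    (hsum : ∑ k, t k = m) (hτ : ∀ k, |τ k| ≤ 1) {k : ι} (hko : k ≠ o) (hkj : k ≠ j)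
    (hmul : σ k ⬝ᵥ t = m * τ k) : τ k = 0 := by
  have hσk := hσ.isSignVector k hko
  have hmod := dotProduct_add_one_modEq_four hm hι (hσ.sum_eq k hko) hsum
    (s := {o, j, k}) fun l hl => by
      simp only [Finset.mem_insert, Finset.mem_singleton, not_or] at hl
      exact ⟨hσk.odd (by simp [hl]), ht.odd (by simp [hl])⟩
  rw [hmul, Finset.sum_insert (by simp [hj.symm, hko.symm]), Finset.sum_pair hkj.symm,
    hσk.eq_zero o (by simp), hσk.eq_zero k (by simp), ht.eq_zero o (by simp),
    ht.eq_zero j (by simp), Int.modEq_iff_dvd] at hmod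
  obtain ⟨p, hp⟩ := hσk.odd (k := j) (by simp [hj, hkj.symm])
  obtain ⟨q, hq⟩ := ht.odd (k := k) (by simp [hko, hkj])
  have hmτ : Even ((m : ℤ) * τ k) := by rw [Int.even_iff]; omega
  have hτk : Even (τ k) :=
    (Int.even_mul.1 hmτ).resolve_left (Int.not_even_iff_odd.2 (by exact_mod_cast hm))
  rcases Int.abs_le_one_iff.1 (hτ k) with h | h | h
  · exact h
  all_goals rw [h] at hτk; exact absurd hτk (by decide)

/-- Otherwise `τ` would be supported on the two zeros of `t`. -/
lemma zero_ne_border (hσ : IsBorderedConference m o σ) (hm : Odd m) (hm1 : 1 < m)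
    (hι : Fintype.card ι = m ^ 2 + 2) {i j : ι} (hij : i ≠ j) (ht : IsSignVector t {i, j})
    (hsum : ∑ k, t k = m) (hτ : ∀ k, |τ k| ≤ 1) (hττ : τ ⬝ᵥ τ = m ^ 2)
    (hmul : ∀ k ≠ o, σ k ⬝ᵥ t = m * τ k) : i ≠ o := by
  rintro rfl
  have hsupp : τ ⬝ᵥ τ = ∑ k ∈ {i, j}, τ k * τ k := by
    refine (Finset.sum_subset (Finset.subset_univ _) fun k _ hk => ?_).symm
    simp only [Finset.mem_insert, Finset.mem_singleton, not_or] at hk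
    rw [hσ.eq_zero_of_border_zero hm hι hij.symm ht hsum hτ hk.1 hk.2 (hmul k hk.1), zero_mul]
  have hle : ∀ k, τ k * τ k ≤ 1 := fun k => by
    simpa [sq] using (sq_le_one_iff_abs_le_one (τ k)).2 (hτ k)
  have hlt : (2 : ℤ) < m ^ 2 := by
    have : (2 : ℤ) ≤ m := by exact_mod_cast hm1
    nlinarith
  rw [Finset.sum_pair hij, hττ] at hsupp
  linarith [hle i, hle j]

/-- The congruence modulo `4` fixes the product of the five signs `χ * τ k`, `t o`, `t k`, `σ i k`
and `σ j k`. -/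
lemma code_mul_apply_eq (hσ : IsBorderedConference m o σ) (hm : Odd m)
    (hι : Fintype.card ι = m ^ 2 + 2) {i j : ι} (hio : i ≠ o) (hjo : j ≠ o) (hij : i ≠ j)
    (ht : IsSignVector t {i, j}) (hsum : ∑ k, t k = m) (hτ : ∀ k, |τ k| ≤ 1) {χ : ℤ}
    (hχ : IsUnit χ) (hmχ : 4 ∣ (m : ℤ) - χ) {k : ι} (hko : k ≠ o) (hmul : σ k ⬝ᵥ t = m * τ k) :
    t k * τ k = -(χ * t o) * (σ i k * σ j k) := by
  by_cases hk : k ∈ ({i, j} : Finset ι)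
  · have hσσ : σ i k * σ j k = 0 := by
      rcases (by simpa using hk : k = i ∨ k = j) with rfl | rfl
      · rw [(hσ.isSignVector k hko).eq_zero k (by simp), zero_mul]
      · rw [(hσ.isSignVector k hko).eq_zero k (by simp), mul_zero]
    rw [ht.eq_zero k hk, hσσ, zero_mul, mul_zero]
  obtain ⟨hki, hkj⟩ : k ≠ i ∧ k ≠ j := by simpa using hk
  have hσk := hσ.isSignVector k hko
  have hmod := dotProduct_add_one_modEq_four hm hι (hσ.sum_eq k hko) hsum
    (s := {o, k, i, j}) fun l hl => by
      simp only [Finset.mem_insert, Finset.mem_singleton, not_or] at hl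
      exact ⟨hσk.odd (by simp [hl]), ht.odd (by simp [hl])⟩
  rw [hmul, Finset.sum_insert (by simp [hko.symm, hio.symm, hjo.symm]),
    Finset.sum_insert (by simp [hki, hkj]), Finset.sum_pair hij, hσk.eq_zero o (by simp),
    hσk.eq_zero k (by simp), ht.eq_zero i (by simp), ht.eq_zero j (by simp),
    hσ.symm hm hι hko hio, hσ.symm hm hι hko hjo, Int.modEq_iff_dvd] at hmod
  have hto := ht.isUnit o (by simp [hio.symm, hjo.symm])
  have htk := ht.isUnit k hk
  have hσi := (hσ.isSignVector i hio).isUnit k (by simp [hko, hki])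
  have hσj := (hσ.isSignVector j hjo).isUnit k (by simp [hko, hkj])
  have hτk : IsUnit (τ k) := by
    rw [Int.isUnit_iff]
    refine (Int.abs_le_one_iff.1 (hτ k)).resolve_left fun h0 => ?_
    have heven : Even (t o + t k + (σ i k + σ j k)) :=
      ((odd_of_isUnit hto).add_odd (odd_of_isUnit htk)).add
        ((odd_of_isUnit hσi).add_odd (odd_of_isUnit hσj))
    rw [Int.even_iff] at heven
    rw [h0] at hmod
    omega
  have hprod : χ * τ k * t o * t k * σ i k * σ j k = -1 := by
    refine mul_eq_neg_one_of_four_dvd (hχ.mul hτk) hto htk hσi hσj ?_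
    have := hmχ.mul_right (τ k)
    rw [sub_mul] at this
    omega
  have hsq : (χ * t o * (σ i k * σ j k)) * (χ * t o * (σ i k * σ j k)) = 1 :=
    Int.isUnit_mul_self ((hχ.mul hto).mul (hσi.mul hσj))
  linear_combination (-t k * τ k) * hsq + χ * t o * (σ i k * σ j k) * hprod

lemma dotProduct_eq_one (hσ : IsBorderedConference m o σ) (hm : Odd m) (hm1 : 1 < m)
    (hι : Fintype.card ι = m ^ 2 + 2) (ht : ∀ k, |t k| ≤ 1) (hsum : ∑ k, t k = m)
    (htt : t ⬝ᵥ t = m ^ 2) (hτ : ∀ k, |τ k| ≤ 1) (hττ : τ ⬝ᵥ τ = m ^ 2)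
    (hmul : ∀ k ≠ o, σ k ⬝ᵥ t = m * τ k) (ho : τ o = t o) : t ⬝ᵥ τ = 1 := by
  obtain ⟨s, hs⟩ := exists_isSignVector ht
  obtain ⟨i, j, hij, rfl⟩ : ∃ i j, i ≠ j ∧ s = {i, j} := by
    have := hs.card_add_dotProduct_self
    rw [htt, hι] at this
    push_cast at this
    exact Finset.card_eq_two.1 (by omega)
  have hio := hσ.zero_ne_border hm hm1 hι hij hs hsum hτ hττ hmul
  have hjo := hσ.zero_ne_border hm hm1 hι hij.symm (Finset.pair_comm i j ▸ hs) hsum hτ hττ hmul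
  obtain ⟨χ, hχ, hmχ⟩ := exists_isUnit_four_dvd_sub (n := m) (by exact_mod_cast hm)
  have hpoint : ∀ k, t k * τ k = (if k = o then 1 else 0) + -(χ * t o) * (σ i k * σ j k) := by
    intro k
    rcases eq_or_ne k o with rfl | hko
    · rw [ho, Int.isUnit_mul_self (hs.isUnit k (by simp [hio.symm, hjo.symm])),
        (hσ.isSignVector i hio).eq_zero k (by simp)]
      simp
    · rw [hσ.code_mul_apply_eq hm hι hio hjo hij hs hsum hτ hχ hmχ hko (hmul k hko), if_neg hko,
        zero_add]
  have horth : ∑ k, σ i k * σ j k = 0 := hσ.dotProduct_eq_zero i hio j hjo hij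
  simp [dotProduct, hpoint, Finset.sum_add_distrib, ← Finset.mul_sum, horth]

end IsBorderedConference

end Conference

section Simplex

variable {ι E : Type*} [Fintype ι] [NormedAddCommGroup E] [InnerProductSpace ℝ E]
  {x y : ι → E}

/-- A full-dimensional regular simplex inscribed in the unit sphere of `E`, generalizing
`IsRegularSimplex`. -/
structure IsInscribedSimplex (x : ι → E) : Prop where
  card_eq : Fintype.card ι = finrank ℝ E + 1
  norm_eq_one : ∀ i, ‖x i‖ = 1
  inner_eq : ∀ i j, i ≠ j → ⟪x i, x j⟫ = -1 / finrank ℝ E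

namespace IsInscribedSimplex

variable [FiniteDimensional ℝ E]

lemma finrank_pos (hx : IsInscribedSimplex x) : (0 : ℝ) < finrank ℝ E := by
  have : Nonempty ι := Fintype.card_pos_iff.1 (by rw [hx.card_eq]; exact Nat.succ_pos _)
  have : Nontrivial E := ⟨x (Classical.arbitrary ι), 0, fun h => by
    simpa [h] using hx.norm_eq_one (Classical.arbitrary ι)⟩
  exact_mod_cast Module.finrank_pos (R := ℝ) (M := E)

lemma inner_sum_smul (hx : IsInscribedSimplex x) (c : ι → ℝ) (j : ι) :
    ⟪x j, ∑ i, c i • x i⟫ = ((finrank ℝ E + 1) * c j - ∑ i, c i) / finrank ℝ E := by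
  classical
  have hd := hx.finrank_pos.ne'
  have hgram : ∀ i, ⟪x j, x i⟫ =
      (if j = i then (finrank ℝ E + 1 : ℝ) / finrank ℝ E else 0) - 1 / finrank ℝ E := fun i => by
    split_ifs with h
    · rw [← h, real_inner_self_eq_norm_sq, hx.norm_eq_one]
      field_simp
      ring
    · rw [hx.inner_eq j i h]
      ring
  simp only [inner_sum, inner_smul_right, hgram, mul_sub, Finset.sum_sub_distrib, mul_ite,
    mul_zero, Finset.sum_ite_eq, Finset.mem_univ, if_true, ← Finset.sum_mul]
  ring

lemma sum_eq_zero (hx : IsInscribedSimplex x) : ∑ i, x i = 0 := by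
  have h : ∀ j, ⟪x j, ∑ i, x i⟫ = 0 := fun j => by
    simpa [hx.card_eq] using hx.inner_sum_smul (fun _ => 1) j
  rw [← inner_self_eq_zero (𝕜 := ℝ), sum_inner]
  exact Finset.sum_eq_zero fun j _ => h j

lemma sum_inner_eq_zero (hx : IsInscribedSimplex x) (u : E) : ∑ i, ⟪x i, u⟫ = 0 := by
  rw [← sum_inner, hx.sum_eq_zero, inner_zero_left]

lemma affineIndependent (hx : IsInscribedSimplex x) : AffineIndependent ℝ x := by
  classical
  rw [affineIndependent_iff]
  intro s w hsum hw j hj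
  have h := hx.inner_sum_smul (fun i => if i ∈ s then w i else 0) j
  simp only [ite_smul, zero_smul, Finset.sum_ite_mem, Finset.univ_inter, hw, hsum, hj, if_true,
    inner_zero_right, sub_zero] at h
  have hd := hx.finrank_pos
  rcases div_eq_zero_iff.1 h.symm with h | h
  · exact (mul_eq_zero.1 h).resolve_left (by positivity)
  · exact absurd h hd.ne'

lemma span_eq_top (hx : IsInscribedSimplex x) : Submodule.span ℝ (Set.range x) = ⊤ := by
  rw [eq_top_iff, ← hx.affineIndependent.vectorSpan_eq_top_of_card_eq_finrank_add_one hx.card_eq,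
    vectorSpan_def, Submodule.span_le]
  rintro _ ⟨u, hu, v, hv, rfl⟩
  exact sub_mem (Submodule.subset_span hu) (Submodule.subset_span hv)

lemma ext_inner (hx : IsInscribedSimplex x) {u v : E} (h : ∀ i, ⟪x i, u⟫ = ⟪x i, v⟫) : u = v := by
  have heq : innerₛₗ ℝ u = innerₛₗ ℝ v := LinearMap.ext_on hx.span_eq_top <| by
    rintro _ ⟨i, rfl⟩
    simpa [real_inner_comm] using h i
  exact ext_inner_right ℝ fun w => by simpa using LinearMap.congr_fun heq w

lemma sum_inner_smul (hx : IsInscribedSimplex x) (u : E) :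
    ∑ i, (finrank ℝ E / (finrank ℝ E + 1) * ⟪x i, u⟫) • x i = u := by
  have hd := hx.finrank_pos
  refine hx.ext_inner fun j => ?_
  rw [hx.inner_sum_smul, ← Finset.mul_sum, hx.sum_inner_eq_zero]
  field_simp
  ring

lemma sum_inner_mul_inner (hx : IsInscribedSimplex x) (u v : E) :
    ∑ i, ⟪x i, u⟫ * ⟪x i, v⟫ = (finrank ℝ E + 1) / finrank ℝ E * ⟪u, v⟫ := by
  have hd := hx.finrank_pos
  conv_rhs => rw [← hx.sum_inner_smul u]
  simp only [sum_inner, inner_smul_left, Finset.mul_sum, RCLike.conj_to_real]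
  refine Finset.sum_congr rfl fun i _ => ?_
  field_simp

lemma exists_linearIsometryEquiv {F : Type*} [NormedAddCommGroup F] [InnerProductSpace ℝ F]
    [FiniteDimensional ℝ F] {y : ι → F} (hx : IsInscribedSimplex x) (hy : IsInscribedSimplex y) :
    ∃ T : E ≃ₗᵢ[ℝ] F, ∀ i, T (x i) = y i := by
  have hd := hx.finrank_pos
  have hdim : finrank ℝ E = finrank ℝ F := by
    have := hx.card_eq.symm.trans hy.card_eq
    omega
  let T : E →ₗ[ℝ] F :=
    ∑ i, (innerₛₗ ℝ (x i)).smulRight ((finrank ℝ E / (finrank ℝ E + 1) : ℝ) • y i)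
  have hT : ∀ u, T u = ∑ i, (finrank ℝ E / (finrank ℝ E + 1) * ⟪x i, u⟫) • y i := fun u => by
    simp [T, smul_smul, mul_comm]
  have hinner : ∀ j u, ⟪y j, T u⟫ = ⟪x j, u⟫ := fun j u => by
    rw [hT, hy.inner_sum_smul, ← Finset.mul_sum, hx.sum_inner_eq_zero, ← hdim]
    field_simp
    ring
  have hisom : ∀ u v, ⟪T u, T v⟫ = ⟪u, v⟫ := fun u v => by
    have h := hy.sum_inner_mul_inner (T u) (T v)
    simp only [hinner, hx.sum_inner_mul_inner u v, ← hdim] at h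
    exact (mul_left_cancel₀ (by positivity) h).symm
  refine ⟨(T.isometryOfInner hisom).toLinearIsometryEquiv hdim, fun i => hy.ext_inner fun j => ?_⟩
  change ⟪y j, T (x i)⟫ = _
  rw [hinner]
  rcases eq_or_ne j i with rfl | hji
  · simp [hx.norm_eq_one, hy.norm_eq_one]
  · rw [hx.inner_eq j i hji, hy.inner_eq j i hji, hdim]

lemma exists_involutive_linearIsometryEquiv (hx : IsInscribedSimplex x)
    (hy : IsInscribedSimplex y) (hxy : ∀ i j, ⟪x i, y j⟫ = ⟪x j, y i⟫) :
    ∃ T : E ≃ₗᵢ[ℝ] E, Function.Involutive T ∧ ∀ i, T (x i) = y i := by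
  obtain ⟨T, hT⟩ := hx.exists_linearIsometryEquiv hy
  have hT' : ∀ j, T (y j) = x j := fun j => hy.ext_inner fun i => by
    rw [← hT, T.inner_map_map, hxy, hT, real_inner_comm]
  refine ⟨T, fun u => hx.ext_inner fun i => ?_, hT⟩
  calc ⟪x i, T (T u)⟫ = ⟪T (y i), T (T u)⟫ := by rw [hT']
    _ = ⟪T (x i), T u⟫ := by rw [T.inner_map_map, hT]
    _ = ⟪x i, u⟫ := T.inner_map_map _ _

end IsInscribedSimplex

end Simplex

section Codes

variable {m : ℕ}

/-- The inner product with a vertex that corresponds to the entry `r` of a code. The offset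
`angle m 0 = -1 / (m ^ 2 + 1)` is the inner product of two vertices of the simplex, and the scale
is such that unit vectors have codes of squared length `m ^ 2`. For `m = 3` the values at `1`, `0`
and `-1` are `α1`, `α2` and `α3`. -/
def angle (m : ℕ) (r : ℝ) : ℝ := ((m ^ 2 + 2) * r / m - 1) / (m ^ 2 + 1)

/-- The three admissible inner products. -/
def angles (m : ℕ) : Set ℝ := {r | ∃ k : ℤ, |k| ≤ 1 ∧ angle m k = r}

lemma angle_injective (hm : m ≠ 0) : Function.Injective (angle m) := fun r s h => by
  have hm' : (m : ℝ) ≠ 0 := by exact_mod_cast hm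
  have hd : (m ^ 2 + 1 : ℝ) ≠ 0 := by positivity
  have hN : (m ^ 2 + 2 : ℝ) ≠ 0 := by positivity
  simpa [angle, div_left_inj' hd, div_left_inj' hm', hN] using h

lemma angle_zero (m : ℕ) : angle m 0 = -1 / (m ^ 2 + 1) := by
  simp [angle]

lemma angle_self (hm : m ≠ 0) : angle m m = 1 := by
  have hm' : (m : ℝ) ≠ 0 := by exact_mod_cast hm
  rw [angle]
  field_simp
  ring

lemma angle_mem_angles_iff (hm : m ≠ 0) {r : ℝ} :
    angle m r ∈ angles m ↔ ∃ k : ℤ, |k| ≤ 1 ∧ (k : ℝ) = r := by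
  simp only [angles, Set.mem_ofPred_eq, (angle_injective hm).eq_iff]

lemma one_notMem_angles (hm : 1 < m) : (1 : ℝ) ∉ angles m := by
  rw [← angle_self (by omega : m ≠ 0), angle_mem_angles_iff (by omega)]
  rintro ⟨k, hk, hkm⟩
  rw [show k = m by exact_mod_cast hkm, Nat.abs_cast] at hk
  omega

lemma angle_one_div_ne_one (hm : 1 < m) : angle m (1 / m) ≠ 1 := by
  have hm' : (1 : ℝ) < m := by exact_mod_cast hm
  refine fun h => (angle_injective (by omega)).ne (?_ : (1 / m : ℝ) ≠ m)
    (h.trans (angle_self (by omega)).symm)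
  exact (((div_lt_one (by linarith)).2 hm').trans hm').ne

lemma angle_one_div_notMem_angles (hm : 1 < m) : angle m (1 / m) ∉ angles m := by
  rw [angle_mem_angles_iff (by omega)]
  rintro ⟨k, -, hk⟩
  have hm' : (m : ℝ) ≠ 0 := by exact_mod_cast (by omega : m ≠ 0)
  have hkm : k * m = 1 := by exact_mod_cast (eq_div_iff hm').1 hk
  have := Int.natAbs_dvd_natAbs.2 (Dvd.intro_left k hkm)
  simp at this
  omega

variable {ι E : Type*} [NormedAddCommGroup E] [InnerProductSpace ℝ E]
  {x : ι → E} {u v : E} {t s : ι → ℤ}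

/-- The integer vector `t` encodes the position of `u` relative to the vertices `x`. -/
def HasCode (m : ℕ) (x : ι → E) (u : E) (t : ι → ℤ) : Prop := ∀ i, ⟪x i, u⟫ = angle m (t i)

/-- The unit vectors making only admissible angles with `C`; for `C = C1` they are the vectors of
`Y ∪ C2`, and for `C = C1 ∪ C2` the vectors of `Z`. -/
def compatibleVectors (m : ℕ) (C : Set E) : Set E := {u | ‖u‖ = 1 ∧ ∀ v ∈ C, ⟪v, u⟫ ∈ angles m}

lemma exists_hasCode (h : ∀ i, ⟪x i, u⟫ ∈ angles m) :
    ∃ t, HasCode m x u t ∧ ∀ i, |t i| ≤ 1 := by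
  choose t ht hu using h
  exact ⟨t, fun i => (hu i).symm, ht⟩

lemma compatibleVectors_anti {C D : Set E} (h : C ⊆ D) :
    compatibleVectors m D ⊆ compatibleVectors m C :=
  fun _ hu => ⟨hu.1, fun v hv => hu.2 v (h hv)⟩

lemma mapsTo_compatibleVectors {T : E ≃ₗᵢ[ℝ] E} (hT : Function.Involutive T) {C : Set E}
    (hC : Set.MapsTo T C C) :
    Set.MapsTo T (compatibleVectors m C) (compatibleVectors m C) := by
  rintro u ⟨hu, huC⟩
  refine ⟨by rw [T.norm_map, hu], fun v hv => ?_⟩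
  rw [← hT v, T.inner_map_map]
  exact huC _ (hC hv)

namespace HasCode

lemma setOf_inner_eq (ht : HasCode m x u t) (hm : m ≠ 0) {k : ℤ} {a : ℝ}
    (ha : angle m k = a) : {i | ⟪x i, u⟫ = a} = {i | t i = k} := by
  ext i
  simp [← ha, ht i, (angle_injective hm).eq_iff]

variable [Fintype ι] [FiniteDimensional ℝ E]

lemma sum_eq (ht : HasCode m x u t) (hx : IsInscribedSimplex x) (hm : m ≠ 0)
    (hE : finrank ℝ E = m ^ 2 + 1) : ∑ i, t i = m := by
  have hm' : (m : ℝ) ≠ 0 := by exact_mod_cast hm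
  have hι : (Fintype.card ι : ℝ) = m ^ 2 + 2 := by
    rw [hx.card_eq, hE]
    push_cast
    ring
  have h := hx.sum_inner_eq_zero u
  simp only [ht _, angle, ← Finset.sum_div, Finset.sum_sub_distrib, ← Finset.mul_sum,
    Finset.sum_const, Finset.card_univ, nsmul_eq_mul, hι] at h
  field_simp at h
  have hsum := (mul_eq_zero.1 (h.trans (mul_zero _))).resolve_left (by positivity)
  exact_mod_cast sub_eq_zero.1 hsum

lemma inner_eq (ht : HasCode m x u t) (hs : HasCode m x v s) (hx : IsInscribedSimplex x)
    (hm : m ≠ 0) (hE : finrank ℝ E = m ^ 2 + 1) : ⟪u, v⟫ = angle m ((t ⬝ᵥ s : ℤ) / m) := by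
  have hm' : (m : ℝ) ≠ 0 := by exact_mod_cast hm
  have hι : (Fintype.card ι : ℝ) = m ^ 2 + 2 := by
    rw [hx.card_eq, hE]
    push_cast
    ring
  have hsumt : ∑ i, (t i : ℝ) = m := by exact_mod_cast ht.sum_eq hx hm hE
  have hsums : ∑ i, (s i : ℝ) = m := by exact_mod_cast hs.sum_eq hx hm hE
  have hmul : ∀ i, ⟪x i, u⟫ * ⟪x i, v⟫ =
      ((m ^ 2 + 2) ^ 2 / m ^ 2 * (t i * s i) - (m ^ 2 + 2) / m * t i - (m ^ 2 + 2) / m * s i + 1)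
        / (m ^ 2 + 1) ^ 2 := fun i => by
    rw [ht i, hs i, angle, angle]
    field_simp
    ring
  have h := hx.sum_inner_mul_inner u v
  simp only [hmul, ← Finset.sum_div, Finset.sum_add_distrib, Finset.sum_sub_distrib,
    ← Finset.mul_sum, hsumt, hsums, Finset.sum_const, Finset.card_univ, nsmul_eq_mul, hι, hE] at h
  rw [angle, dotProduct]
  push_cast at h ⊢
  field_simp at h ⊢
  refine mul_left_cancel₀ (by positivity : (m ^ 2 + 2 : ℝ) ≠ 0) ?_
  linear_combination -h

lemma dotProduct_eq (ht : HasCode m x u t) (hs : HasCode m x v s) (hx : IsInscribedSimplex x)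
    (hm : m ≠ 0) (hE : finrank ℝ E = m ^ 2 + 1) {n : ℤ} (h : ⟪u, v⟫ = angle m n) :
    t ⬝ᵥ s = m * n := by
  have hm' : (m : ℝ) ≠ 0 := by exact_mod_cast hm
  rw [ht.inner_eq hs hx hm hE] at h
  have := (div_eq_iff hm').1 (angle_injective hm h)
  rw [mul_comm]
  exact_mod_cast this

lemma dotProduct_self_eq (ht : HasCode m x u t) (hx : IsInscribedSimplex x) (hm : m ≠ 0)
    (hE : finrank ℝ E = m ^ 2 + 1) (hu : ‖u‖ = 1) : t ⬝ᵥ t = m ^ 2 := by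
  rw [ht.dotProduct_eq ht hx hm hE (n := m), sq]
  rw [real_inner_self_eq_norm_sq, hu, one_pow, Int.cast_natCast, angle_self hm]

lemma card_zeros_eq_two (ht : HasCode m x u t) (hx : IsInscribedSimplex x) (hm : m ≠ 0)
    (hE : finrank ℝ E = m ^ 2 + 1) (hu : ‖u‖ = 1) {z : Finset ι} (hz : IsSignVector t z) :
    z.card = 2 := by
  have h := hz.card_add_dotProduct_self
  rw [ht.dotProduct_self_eq hx hm hE hu, hx.card_eq, hE] at h
  push_cast at h
  omega

end HasCode

end Codes

section Cliques

variable {ι E : Type*} [Fintype ι] [NormedAddCommGroup E] [InnerProductSpace ℝ E] {m : ℕ}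
  {x y : ι → E} {o : ι} {D : Set E} {σ : ι → ι → ℤ}

/-- The clique `C2` of the graph on `Y1`, relative to the simplex `x` and its base vertex `x o`.
Membership in `Y1` is encoded by admissible angles with `x`, the one with `x o` being `angle m 0`,
instead of by the numbers of vertices at each angle. -/
structure IsSimplexClique (m : ℕ) (x : ι → E) (o : ι) (D : Set E) : Prop where
  subset_compatibleVectors : D ⊆ compatibleVectors m (Set.range x)
  inner_base : ∀ w ∈ D, ⟪x o, w⟫ = angle m 0
  pairwise_inner : D.Pairwise fun v w => ⟪v, w⟫ = angle m 0
  ncard_eq : D.ncard = m ^ 2 + 1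

/-- The simplex `y` formed by `x o` and the vectors of a clique, the vector `y j` being the one
whose code `σ j` vanishes at `o` and `j`. -/
structure IsCompanionSimplex [DecidableEq ι] (m : ℕ) (x : ι → E) (o : ι) (y : ι → E)
    (σ : ι → ι → ℤ) : Prop where
  isInscribedSimplex : IsInscribedSimplex y
  apply_base : y o = x o
  hasCode : ∀ j ≠ o, HasCode m x (y j) (σ j)
  isSignVector : ∀ j ≠ o, IsSignVector (σ j) {o, j}

variable [FiniteDimensional ℝ E]

namespace IsSimplexClique

lemma eq_of_isSignVector (hD : IsSimplexClique m x o D) (hx : IsInscribedSimplex x)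
    (hm : Odd m) (hE : finrank ℝ E = m ^ 2 + 1) {v w : E} (hv : v ∈ D) (hw : w ∈ D)
    {t s : ι → ℤ} (ht : HasCode m x v t) (hs : HasCode m x w s) {z : Finset ι}
    (hzt : IsSignVector t z) (hzs : IsSignVector s z) : v = w := by
  by_contra hvw
  have horth : t ⬝ᵥ s = 0 := by
    simpa using ht.dotProduct_eq hs hx hm.pos.ne' hE (n := 0)
      (by simpa using hD.pairwise_inner hv hw hvw)
  have hparity := hzt.dotProduct_modEq_dotProduct_self hzs
  rw [horth, ht.dotProduct_self_eq hx hm.pos.ne' hE (hD.subset_compatibleVectors hv).1] at hparity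
  have hodd : Odd ((m : ℤ) ^ 2) := by exact_mod_cast hm.pow
  exact Int.not_even_iff_odd.2 hodd (Int.even_iff.2 hparity.symm)

variable [DecidableEq ι]

lemma exists_hasCode_isSignVector (hD : IsSimplexClique m x o D) (hx : IsInscribedSimplex x)
    (hm : m ≠ 0) (hE : finrank ℝ E = m ^ 2 + 1) {w : E} (hw : w ∈ D) :
    ∃ j ≠ o, ∃ t, HasCode m x w t ∧ IsSignVector t {o, j} := by
  obtain ⟨hnorm, hangles⟩ := hD.subset_compatibleVectors hw
  obtain ⟨t, ht, habs⟩ := exists_hasCode fun i => hangles (x i) ⟨i, rfl⟩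
  obtain ⟨z, hz⟩ := exists_isSignVector habs
  have hto : t o = 0 := by
    exact_mod_cast angle_injective hm ((ht o).symm.trans (hD.inner_base w hw))
  obtain ⟨j, hj⟩ : ∃ j, z.erase o = {j} := Finset.card_eq_one.1 <| by
    rw [Finset.card_erase_of_mem (hz.eq_zero_iff.1 hto), ht.card_zeros_eq_two hx hm hE hnorm hz]
  have hzj : z = {o, j} := by rw [← Finset.insert_erase (hz.eq_zero_iff.1 hto), hj]
  exact ⟨j, Finset.ne_of_mem_erase (hj ▸ Finset.mem_singleton_self j), t, ht, hzj ▸ hz⟩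

lemma exists_bijOn (hD : IsSimplexClique m x o D) (hx : IsInscribedSimplex x)
    (hm : Odd m) (hE : finrank ℝ E = m ^ 2 + 1) :
    ∃ p : E → ι, Set.BijOn p D {o}ᶜ ∧
      ∀ w ∈ D, ∃ t, HasCode m x w t ∧ IsSignVector t {o, p w} := by
  have hcode : ∀ w, ∃ j, w ∈ D → j ≠ o ∧ ∃ t, HasCode m x w t ∧ IsSignVector t {o, j} := by
    intro w
    by_cases hw : w ∈ D
    · obtain ⟨j, hj, t, ht⟩ := hD.exists_hasCode_isSignVector hx hm.pos.ne' hE hw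
      exact ⟨j, fun _ => ⟨hj, t, ht⟩⟩
    · exact ⟨o, fun h => absurd h hw⟩
  choose p hp using hcode
  have hmaps : Set.MapsTo p D {o}ᶜ := fun w hw => (hp w hw).1
  have hinj : Set.InjOn p D := fun v hv w hw hvw => by
    obtain ⟨-, t, ht, hzt⟩ := hp v hv
    obtain ⟨-, s, hs, hzs⟩ := hp w hw
    exact hD.eq_of_isSignVector hx hm hE hv hw ht hs hzt (hvw ▸ hzs)
  have hcard : ({o}ᶜ : Set ι).ncard = D.ncard := by
    rw [Set.ncard_compl, Set.ncard_singleton, Nat.card_eq_fintype_card, hx.card_eq, hE, hD.ncard_eq,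
      Nat.add_sub_cancel]
  refine ⟨p, ⟨hmaps, hinj, ?_⟩, fun w hw => (hp w hw).2⟩
  have hsurj := Set.eq_of_subset_of_ncard_le hmaps.image_subset
    (by rw [hinj.ncard_image, hcard])
  exact hsurj.ge

lemma exists_isCompanionSimplex (hD : IsSimplexClique m x o D) (hx : IsInscribedSimplex x)
    (hm : Odd m) (hE : finrank ℝ E = m ^ 2 + 1) :
    ∃ y σ, IsCompanionSimplex m x o y σ ∧ y '' {o}ᶜ = D := by
  obtain ⟨p, hp, hcode⟩ := hD.exists_bijOn hx hm hE
  let q := Function.invFunOn p D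
  have hpq : Set.InvOn q p D {o}ᶜ := hp.invOn_invFunOn
  have hq : Set.BijOn q {o}ᶜ D := hp.symm hpq.symm
  choose! c hc hcz using hcode
  let y := Function.update q o (x o)
  have hy : ∀ j ≠ o, y j = q j := fun j hj => Function.update_of_ne hj _ _
  have hyo : y o = x o := Function.update_self o _ _
  have hangle : angle m 0 = -1 / finrank ℝ E := by rw [angle_zero, hE]; norm_cast
  refine ⟨y, fun j => c (q j), ⟨⟨hx.card_eq, fun j => ?_, fun i j hij => ?_⟩, hyo,
    fun j hj => ?_, fun j hj => ?_⟩, (Set.image_congr hy).trans hq.image_eq⟩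
  · by_cases hj : j = o
    · rw [hj, hyo, hx.norm_eq_one]
    · exact hy j hj ▸ (hD.subset_compatibleVectors (hq.mapsTo hj)).1
  · rw [← hangle]
    by_cases hi : i = o
    · have hj : j ≠ o := hi ▸ hij.symm
      rw [hi, hyo, hy j hj, hD.inner_base _ (hq.mapsTo hj)]
    by_cases hj : j = o
    · rw [hj, hyo, hy i hi, real_inner_comm, hD.inner_base _ (hq.mapsTo hi)]
    · rw [hy i hi, hy j hj]
      exact hD.pairwise_inner (hq.mapsTo hi) (hq.mapsTo hj) (hq.injOn.ne hi hj hij)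
  · rw [hy j hj]
    exact hc _ (hq.mapsTo hj)
  · simpa only [hpq.2 hj] using hcz _ (hq.mapsTo hj)

end IsSimplexClique

namespace IsCompanionSimplex

variable [DecidableEq ι]

lemma isBorderedConference (hy : IsCompanionSimplex m x o y σ)
    (hx : IsInscribedSimplex x) (hm : m ≠ 0) (hE : finrank ℝ E = m ^ 2 + 1) :
    IsBorderedConference m o σ where
  isSignVector := hy.isSignVector
  sum_eq j hj := (hy.hasCode j hj).sum_eq hx hm hE
  dotProduct_eq_zero i hi j hj hij := by
    rw [(hy.hasCode i hi).dotProduct_eq (hy.hasCode j hj) hx hm hE (n := 0), mul_zero]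
    rw [hy.isInscribedSimplex.inner_eq i j hij, Int.cast_zero, angle_zero, hE]
    norm_cast

lemma inner_comm (hy : IsCompanionSimplex m x o y σ) (hx : IsInscribedSimplex x) (hm : Odd m)
    (hE : finrank ℝ E = m ^ 2 + 1) (i j : ι) : ⟪x i, y j⟫ = ⟪x j, y i⟫ := by
  have hbase : ∀ k ≠ o, ⟪x o, y k⟫ = ⟪x k, y o⟫ := fun k hk => by
    rw [hy.apply_base, hx.inner_eq k o hk, ← hy.apply_base,
      hy.isInscribedSimplex.inner_eq o k hk.symm]
  have hι : Fintype.card ι = m ^ 2 + 2 := by rw [hx.card_eq, hE]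
  by_cases hi : i = o <;> by_cases hj : j = o
  · rw [hi, hj]
  · rw [hi, hbase j hj]
  · rw [hj, hbase i hi]
  · rw [hy.hasCode j hj i, hy.hasCode i hi j,
      (hy.isBorderedConference hx hm.pos.ne' hE).symm hm hι hj hi]

lemma inner_exchange (hy : IsCompanionSimplex m x o y σ) (hx : IsInscribedSimplex x)
    (hm : Odd m) (hm1 : 1 < m) (hE : finrank ℝ E = m ^ 2 + 1) {T : E ≃ₗᵢ[ℝ] E}
    (hT : Function.Involutive T) (hTx : ∀ i, T (x i) = y i) {u : E}
    (hu : u ∈ compatibleVectors m (Set.range x ∪ Set.range y)) : ⟪u, T u⟫ = angle m (1 / m) := by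
  have hm0 := hm.pos.ne'
  obtain ⟨t, ht, htabs⟩ := exists_hasCode (x := x) fun i => hu.2 _ (.inl ⟨i, rfl⟩)
  obtain ⟨τ, hτ, hτabs⟩ := exists_hasCode (x := y) fun i => hu.2 _ (.inr ⟨i, rfl⟩)
  have hTu : HasCode m x (T u) τ := fun i => by
    rw [← hT (x i), T.inner_map_map, hTx, hτ i]
  have hmul : ∀ k ≠ o, σ k ⬝ᵥ t = m * τ k := fun k hk =>
    (hy.hasCode k hk).dotProduct_eq ht hx hm0 hE (hτ k)
  have ho : τ o = t o := by
    exact_mod_cast angle_injective hm0 ((hτ o).symm.trans (hy.apply_base ▸ ht o))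
  have hone := (hy.isBorderedConference hx hm0 hE).dotProduct_eq_one hm hm1
    (by rw [hx.card_eq, hE]) htabs (ht.sum_eq hx hm0 hE) (ht.dotProduct_self_eq hx hm0 hE hu.1)
    hτabs (hτ.dotProduct_self_eq hy.isInscribedSimplex hm0 hE hu.1) hmul ho
  rw [ht.inner_eq hTu hx hm0 hE, hone, Int.cast_one]

end IsCompanionSimplex

end Cliques

section Splitting

variable {ι E : Type*} [Fintype ι] [NormedAddCommGroup E] [InnerProductSpace ℝ E]
  [FiniteDimensional ℝ E] {m : ℕ} {x : ι → E} {o : ι} {D : Set E}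

lemma IsSimplexClique.exists_exchange (hD : IsSimplexClique m x o D) (hx : IsInscribedSimplex x)
    (hm : Odd m) (hm1 : 1 < m) (hE : finrank ℝ E = m ^ 2 + 1) :
    ∃ T : E ≃ₗᵢ[ℝ] E, Function.Involutive T ∧ T '' (Set.range x ∪ D) = Set.range x ∪ D ∧
      ∀ u ∈ compatibleVectors m (Set.range x ∪ D), ⟪u, T u⟫ = angle m (1 / m) := by
  classical
  obtain ⟨y, σ, hy, hyD⟩ := hD.exists_isCompanionSimplex hx hm hE
  obtain ⟨T, hT, hTx⟩ :=
    hx.exists_involutive_linearIsometryEquiv hy.isInscribedSimplex (hy.inner_comm hx hm hE)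
  have hTy : ∀ i, T (y i) = x i := fun i => by rw [← hTx, hT]
  have hunion : Set.range x ∪ D = Set.range x ∪ Set.range y := by
    rw [← hyD, ← Set.image_univ (f := y), ← Set.compl_union_self {o}, Set.image_union,
      Set.image_singleton, hy.apply_base, Set.union_left_comm,
      Set.union_eq_self_of_subset_right (Set.singleton_subset_iff.2 (Set.mem_range_self o)),
      Set.union_comm]
  refine ⟨T, hT, ?_, hunion ▸ fun u => hy.inner_exchange hx hm hm1 hE hT hTx⟩
  rw [hunion, Set.image_union, ← Set.range_comp, ← Set.range_comp, show T ∘ x = y from funext hTx,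
    show T ∘ y = x from funext hTy, Set.union_comm]

lemma image_eq_of_mapsTo_union {α : Type*} {f : α → α} (hf : Function.Involutive f) {A B : Set α}
    (hAB : Set.MapsTo f (A ∪ B) (A ∪ B)) (hA : ∀ a ∈ A, f a ∉ A) (hB : ∀ b ∈ B, f b ∉ B) :
    f '' A = B := by
  refine Set.Subset.antisymm ?_ fun b hb => ?_
  · rintro _ ⟨a, ha, rfl⟩
    exact (hAB (.inl ha)).resolve_left (hA a ha)
  · exact ⟨f b, (hAB (.inr hb)).resolve_right (hB b hb), hf b⟩

theorem gram_equivalent_of_splitting_general (hm : Odd m) (hm1 : 1 < m)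
    (hE : finrank ℝ E = m ^ 2 + 1) (hx : IsInscribedSimplex x) (hD : IsSimplexClique m x o D)
    {Z1 Z2 : Set E} (hunion : Z1 ∪ Z2 = compatibleVectors m (Set.range x ∪ D))
    (hin1 : Z1.Pairwise fun u v => ⟪u, v⟫ ∈ angles m)
    (hin2 : Z2.Pairwise fun u v => ⟪u, v⟫ ∈ angles m) :
    ∃ T : E ≃ₗᵢ[ℝ] E, T '' (Set.range x ∪ D ∪ Z1) = Set.range x ∪ D ∪ Z2 := by
  obtain ⟨T, hT, hTC, hTZ⟩ := hD.exists_exchange hx hm hm1 hE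
  have hnotMem : ∀ A ⊆ Z1 ∪ Z2, (A.Pairwise fun u v => ⟪u, v⟫ ∈ angles m) →
      ∀ u ∈ A, T u ∉ A := fun A hA hin u hu hTu => by
    have hu' : u ∈ compatibleVectors m (Set.range x ∪ D) := hunion ▸ hA hu
    have hne : u ≠ T u := fun h => angle_one_div_ne_one hm1 <| by
      rw [← hTZ u hu', ← h, real_inner_self_eq_norm_sq, hu'.1, one_pow]
    exact angle_one_div_notMem_angles hm1 (hTZ u hu' ▸ hin hu hTu hne)
  have hZ : T '' Z1 = Z2 := image_eq_of_mapsTo_union hT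
    (hunion ▸ mapsTo_compatibleVectors hT (Set.mapsTo_iff_image_subset.2 hTC.le))
    (hnotMem Z1 Set.subset_union_left hin1) (hnotMem Z2 Set.subset_union_right hin2)
  exact ⟨T, by rw [Set.image_union, hTC, hZ]⟩

end Splitting

section DimensionTen

lemma forall_mem_of_le_ncard_add {κ β : Type*} [Finite κ] {p : κ → Prop} {f : κ → β} {a b c : β}
    (hab : a ≠ b) (hac : a ≠ c) (hbc : b ≠ c)
    (hcard : {i | p i}.ncard ≤ {i | p i ∧ f i = a}.ncard + {i | p i ∧ f i = b}.ncard +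
      {i | p i ∧ f i = c}.ncard) {i : κ} (hi : p i) : f i ∈ ({a, b, c} : Set β) := by
  have hdisjoint : ∀ {r s : β}, r ≠ s →
      Disjoint {i | p i ∧ f i = r} {i | p i ∧ f i = s} := fun hrs =>
    Set.disjoint_left.2 fun _ hr hs => hrs (hr.2.symm.trans hs.2)
  rw [← Set.ncard_union_eq (hdisjoint hab),
    ← Set.ncard_union_eq (Set.disjoint_union_left.2 ⟨hdisjoint hac, hdisjoint hbc⟩)] at hcard
  have hfibers := Set.eq_of_subset_of_ncard_le
    (Set.union_subset (Set.union_subset (fun _ h => h.1) fun _ h => h.1) fun _ h => h.1) hcard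
  rcases hfibers.ge hi with (h | h) | h
  · exact .inl h.2
  · exact .inr (.inl h.2)
  · exact .inr (.inr h.2)

lemma angle_three_one : angle 3 1 = α1 := by norm_num [angle, α1]

lemma angle_three_zero : angle 3 0 = α2 := by norm_num [angle, α2]

lemma angle_three_neg_one : angle 3 (-1) = α3 := by norm_num [angle, α3]

lemma angles_three : angles 3 = {α1, α2, α3} := by
  ext r
  simp only [angles, Int.abs_le_one_iff, Set.mem_ofPred_eq, or_and_right, exists_or,
    exists_eq_left, Int.cast_zero, Int.cast_one, Int.cast_neg, angle_three_one, angle_three_zero,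
    angle_three_neg_one, Set.mem_insert_iff, Set.mem_singleton_iff, eq_comm (a := r)]
  tauto

variable {x : Fin 11 → EuclideanSpace ℝ (Fin 10)} {u : EuclideanSpace ℝ (Fin 10)}
  {C2 : Set (EuclideanSpace ℝ (Fin 10))}

lemma forall_mem_angles_three {κ : Type*} [Finite κ] {p : κ → Prop} {f : κ → ℝ}
    (hcard : {i | p i}.ncard ≤ {i | p i ∧ f i = α1}.ncard + {i | p i ∧ f i = α2}.ncard +
      {i | p i ∧ f i = α3}.ncard) {i : κ} (hi : p i) : f i ∈ angles 3 := by
  rw [angles_three]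
  exact forall_mem_of_le_ncard_add (by norm_num [α1, α2]) (by norm_num [α1, α3])
    (by norm_num [α2, α3]) hcard hi

lemma Y1set_subset_compatibleVectors : Y1set x ⊆ compatibleVectors 3 (Set.range x) := by
  rintro u ⟨hu, hu0, h1, h2, h3⟩
  refine ⟨hu, Set.forall_mem_range.2 fun i => ?_⟩
  by_cases hi : i = 0
  · rw [hi, hu0, angles_three]
    exact .inr (.inl rfl)
  · have hcard : {i : Fin 11 | i ≠ 0}.ncard = 10 := by
      rw [← Set.compl_singleton_eq, Set.ncard_compl, Set.ncard_singleton, Nat.card_fin]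
    exact forall_mem_angles_three (f := fun i => ⟪x i, u⟫) (by rw [hcard, h1, h2, h3]) hi

namespace IsRegularSimplex

lemma isInscribedSimplex (hx : IsRegularSimplex x) : IsInscribedSimplex x where
  card_eq := by simp
  norm_eq_one := hx.1
  inner_eq i j hij := by simpa using hx.2 i j hij

lemma mem_compatibleVectors_iff (hx : IsRegularSimplex x) :
    u ∈ compatibleVectors 3 (Set.range x) ↔ ‖u‖ = 1 ∧ {i | ⟪x i, u⟫ = α1}.ncard = 6 ∧
      {i | ⟪x i, u⟫ = α2}.ncard = 2 ∧ {i | ⟪x i, u⟫ = α3}.ncard = 3 := by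
  constructor
  · rintro ⟨hu, hux⟩
    obtain ⟨t, ht, habs⟩ := exists_hasCode fun i => hux (x i) ⟨i, rfl⟩
    obtain ⟨z, hz⟩ := exists_isSignVector habs
    have hE : finrank ℝ (EuclideanSpace ℝ (Fin 10)) = 3 ^ 2 + 1 := by simp
    have hx' := hx.isInscribedSimplex
    have hsum := hz.sum_eq_ncard_sub_ncard.symm.trans (ht.sum_eq hx' three_ne_zero hE)
    have hsq := hz.dotProduct_self_eq_ncard_add_ncard.symm.trans
      (ht.dotProduct_self_eq hx' three_ne_zero hE hu)
    have hzeros : {i | t i = 0}.ncard = 2 := by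
      simp [hz.eq_zero_iff, ht.card_zeros_eq_two hx' three_ne_zero hE hu hz]
    rw [ht.setOf_inner_eq three_ne_zero (k := 1) (by simpa using angle_three_one),
      ht.setOf_inner_eq three_ne_zero (k := 0) (by simpa using angle_three_zero),
      ht.setOf_inner_eq three_ne_zero (k := -1) (by simpa using angle_three_neg_one)]
    push_cast at hsum hsq
    exact ⟨hu, by omega, hzeros, by omega⟩
  · rintro ⟨hu, h1, h2, h3⟩
    refine ⟨hu, Set.forall_mem_range.2 fun i => ?_⟩
    exact forall_mem_angles_three (p := fun _ => True) (f := fun i => ⟪x i, u⟫)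
      (by simp [h1, h2, h3]) trivial

lemma Zset_eq (hx : IsRegularSimplex x) :
    Zset x C2 = compatibleVectors 3 (Set.range x ∪ C2) := by
  ext u
  constructor
  · rintro ⟨⟨hu, -, hcounts⟩, huC⟩
    have hux := hx.mem_compatibleVectors_iff.2 ⟨hu, hcounts⟩
    refine ⟨hu, fun v hv => hv.elim (hux.2 v) fun hvC => ?_⟩
    rw [real_inner_comm, angles_three]
    exact huC v hvC
  · intro hu
    obtain ⟨hnorm, hcounts⟩ := hx.mem_compatibleVectors_iff.1
      (compatibleVectors_anti Set.subset_union_left hu)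
    refine ⟨⟨hnorm, fun huC => one_notMem_angles (m := 3) (by norm_num) ?_, hcounts⟩,
      fun w hw => ?_⟩
    · simpa [hnorm] using hu.2 u (.inr huC)
    · rw [real_inner_comm, ← angles_three]
      exact hu.2 w (.inr hw)

end IsRegularSimplex

lemma IsClique10.isSimplexClique (hC2 : IsClique10 x C2) : IsSimplexClique 3 x 0 C2 where
  subset_compatibleVectors := hC2.1.trans Y1set_subset_compatibleVectors
  inner_base _ hw := (hC2.1 hw).2.1.trans angle_three_zero.symm
  pairwise_inner v hv w hw hvw := (hC2.2.2 v hv w hw hvw).trans angle_three_zero.symm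
  ncard_eq := hC2.2.1

end DimensionTen

/-- Given the splitting `Z = Z1 ∪ Z2` of `Z` into two 45-element parts (inner
products within parts in `{α1, α2, α3}`, across parts outside), there is an
inner-product-preserving bijection from `C1 ∪ C2 ∪ Z1` onto `C1 ∪ C2 ∪ Z2`,
where `C1 = {x 0, …, x 10}`; i.e. the Gram matrices are permutationally
equivalent. -/
theorem gram_equivalent_of_splitting (x : Fin 11 → EuclideanSpace ℝ (Fin 10))
    (hx : IsRegularSimplex x)
    (C2 : Set (EuclideanSpace ℝ (Fin 10))) (hC2 : IsClique10 x C2)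
    (Z1 Z2 : Set (EuclideanSpace ℝ (Fin 10)))
    (hunion : Z1 ∪ Z2 = Zset x C2) (hdisj : Disjoint Z1 Z2)
    (hcard1 : Z1.ncard = 45) (hcard2 : Z2.ncard = 45)
    (hin1 : ∀ u ∈ Z1, ∀ v ∈ Z1, u ≠ v → ⟪u, v⟫ ∈ ({α1, α2, α3} : Set ℝ))
    (hin2 : ∀ u ∈ Z2, ∀ v ∈ Z2, u ≠ v → ⟪u, v⟫ ∈ ({α1, α2, α3} : Set ℝ))
    (hcross : ∀ z1 ∈ Z1, ∀ z2 ∈ Z2, ⟪z1, z2⟫ ∉ ({α1, α2, α3} : Set ℝ)) :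
    ∃ f : (Set.range x ∪ C2 ∪ Z1 : Set (EuclideanSpace ℝ (Fin 10))) ≃
          (Set.range x ∪ C2 ∪ Z2 : Set (EuclideanSpace ℝ (Fin 10))),
      ∀ u v : (Set.range x ∪ C2 ∪ Z1 : Set (EuclideanSpace ℝ (Fin 10))),
        ⟪(f u : EuclideanSpace ℝ (Fin 10)), (f v : EuclideanSpace ℝ (Fin 10))⟫ =
        ⟪(u : EuclideanSpace ℝ (Fin 10)), (v : EuclideanSpace ℝ (Fin 10))⟫ := by
  obtain ⟨T, hT⟩ := gram_equivalent_of_splitting_general (m := 3) (by decide) (by norm_num)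
    (by simp) hx.isInscribedSimplex hC2.isSimplexClique (hunion.trans hx.Zset_eq)
    (angles_three ▸ hin1) (angles_three ▸ hin2)
  exact ⟨(T.toEquiv.image _).trans (Equiv.setCongr hT), fun u v => T.inner_map_map u v⟩
end
end

section
/- Let x : Fin 11 → ℝ^10 be a regular 11-simplex, C1 = {x 0, …, x 10}, let C2 be a clique of order 10 in the graph on Y1, and let Z1 be a 45-element subset of Z all of whose pairwise inner products of distinct elements lie in {α1, α2, α3}. Then the 66-element set X = C1 ∪ C2 ∪ Z1 is a W-configuration: all pairwise inner products of distinct vectors of X lie in {α1, α2, α3}; every u ∈ X has exactly 30 vectors v ∈ X with ⟨u,v⟩ = α1, exactly 20 with ⟨u,v⟩ = α2, and exactly 15 with ⟨u,v⟩ = α3; and for all distinct u, v ∈ X with ⟨u,v⟩ = α_k and all i, j ∈ {1,2,3}, the number of w ∈ X with ⟨u,w⟩ = α_i and ⟨w,v⟩ = α_j equals p^k_{ij}, where (p^1_{ij}) = [[15,10,4],[10,4,6],[4,6,5]], (p^2_{ij}) = [[15,6,9],[6,10,3],[9,3,3]], (p^3_{ij}) = [[8,12,10],[12,4,4],[10,4,0]]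 (rows indexed by i, columns by j). -/
open RealInnerProductSpace

noncomputable section

/-- The three admissible angles, indexed. -/
def wAngle : Fin 3 → ℝ := ![α1, α2, α3]

/-- The intersection numbers `p^k_{ij}` of the association scheme `W` of the
Witt 4-(11,5,1) design (index `k` first, then row `i`, column `j`). -/
def wP : Fin 3 → Fin 3 → Fin 3 → ℕ :=
  ![![![15,10,4], ![10,4,6], ![4,6,5]],
    ![![15,6,9], ![6,10,3], ![9,3,3]],
    ![![8,12,10], ![12,4,4], ![10,4,0]]]

/-- A `W`-configuration: 66 unit vectors in ℝ^10 whose pairwise inner products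
lie in `{α1, α2, α3}`, realizing the valencies 30, 20, 15 and the intersection
numbers `p^k_{ij}` of the association scheme `W` of the Witt 4-(11,5,1)
design. -/
def IsWConfig (X : Set (EuclideanSpace ℝ (Fin 10))) : Prop :=
  X.ncard = 66 ∧ (∀ u ∈ X, ‖u‖ = 1) ∧
  (∀ u ∈ X, ∀ v ∈ X, u ≠ v → ⟪u, v⟫ ∈ ({α1, α2, α3} : Set ℝ)) ∧
  (∀ u ∈ X, {v | v ∈ X ∧ ⟪u, v⟫ = α1}.ncard = 30 ∧
            {v | v ∈ X ∧ ⟪u, v⟫ = α2}.ncard = 20 ∧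
            {v | v ∈ X ∧ ⟪u, v⟫ = α3}.ncard = 15) ∧
  (∀ u ∈ X, ∀ v ∈ X, u ≠ v → ∀ k i j : Fin 3, ⟪u, v⟫ = wAngle k →
    {w | w ∈ X ∧ ⟪u, w⟫ = wAngle i ∧ ⟪w, v⟫ = wAngle j}.ncard = wP k i j)

/-!
Let `X` be the 66-element union and `S` the simplex `x 0, …, x 10`. Since `S` is a tight frame with
centroid `0`, every `u ∈ X \ S` has the angles `α1`, `α2`, `α3` with exactly 6, 2, 3 vertices of
`S`. The vectors of `X \ S` at angle `α2` to a fixed vertex `z` have pairwise inner products at most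
`-1/10`, so there are at most ten of them, and double counting forces exactly ten: with `z` they
form another regular simplex, the companion of `z`. The simplex `S` and its eleven companions behave
like the vertices of the complete graph `K₁₂`, with the vectors of `X` as its edges: each vector `v`
is the unique common vertex of two of the twelve simplices, whose other vertices are the vectors at
angle `α2` to `v`.

Summing over all these pairs shows that `X` is itself a tight frame with centroid `0`, which gives
the valencies. The two simplices through `v` give all intersection numbers with an index `2`, and
the row sums and the frame relation determine the remaining ones.
-/

section

open scoped Finset

section RegularSimplex

theorem cast_card_offDiag {α R : Type*} [Ring R] (s : Finset α) :
    (#s.offDiag : R) = #s * (#s - 1) := by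
  rw [Finset.offDiag_card, Nat.cast_sub (Nat.le_mul_self _), Nat.cast_mul, mul_sub, mul_one]

variable {E : Type*} [NormedAddCommGroup E] [InnerProductSpace ℝ E]

/-- The vertex set of a regular `n`-simplex inscribed in the unit sphere. -/
structure IsUnitSimplex (n : ℕ) (s : Finset E) : Prop where
  card_eq : #s = n + 1
  norm_eq : ∀ u ∈ s, ‖u‖ = 1
  inner_eq : (s : Set E).Pairwise fun u v => ⟪u, v⟫ = -1 / n

theorem norm_sum_sq_eq_card_add {s : Finset E} (hnorm : ∀ u ∈ s, ‖u‖ = 1) :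
    ‖∑ u ∈ s, u‖ ^ 2 = #s + ∑ p ∈ s.offDiag, ⟪p.1, p.2⟫ := by
  classical
  have hdiag : ∑ u ∈ s, ⟪u, u⟫ = #s := by
    rw [Finset.sum_congr rfl fun u hu => inner_self_eq_one_of_norm_eq_one (hnorm u hu)]
    simp
  simp_rw [← real_inner_self_eq_norm_sq, sum_inner, inner_sum]
  rw [← Finset.sum_product', ← Finset.diag_union_offDiag,
    Finset.sum_union (Finset.disjoint_diag_offDiag s), Finset.sum_diag, hdiag]

theorem neg_card_le_sum_offDiag_inner {s : Finset E} (hnorm : ∀ u ∈ s, ‖u‖ = 1) :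
    -(#s : ℝ) ≤ ∑ p ∈ s.offDiag, ⟪p.1, p.2⟫ := by
  linarith [norm_sum_sq_eq_card_add hnorm, sq_nonneg ‖∑ u ∈ s, u‖]

theorem card_le_of_inner_le_neg_inv {n : ℕ} (hn : n ≠ 0) {s : Finset E}
    (hnorm : ∀ u ∈ s, ‖u‖ = 1) (hinner : (s : Set E).Pairwise fun u v => ⟪u, v⟫ ≤ -1 / n) :
    #s ≤ n + 1 := by
  have hle : ∑ p ∈ s.offDiag, ⟪p.1, p.2⟫ ≤ #s.offDiag • (-1 / n : ℝ) :=
    Finset.sum_le_card_nsmul _ _ _ fun p hp =>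
      have ⟨h1, h2, hne⟩ := Finset.mem_offDiag.1 hp
      hinner h1 h2 hne
  have hn' : (0 : ℝ) < n := by positivity
  have hcard : (#s : ℝ) * (#s - 1) ≤ #s * n := by
    have := (neg_card_le_sum_offDiag_inner hnorm).trans hle
    rw [nsmul_eq_mul, cast_card_offDiag, mul_div_assoc', le_div_iff₀ hn'] at this
    linarith
  by_contra! h
  have h' : (n : ℝ) + 2 ≤ #s := by exact_mod_cast h
  nlinarith

theorem isUnitSimplex_of_inner_le_neg_inv {n : ℕ} (hn : n ≠ 0) {s : Finset E}
    (hcard : #s = n + 1) (hnorm : ∀ u ∈ s, ‖u‖ = 1)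
    (hinner : (s : Set E).Pairwise fun u v => ⟪u, v⟫ ≤ -1 / n) :
    IsUnitSimplex n s where
  card_eq := hcard
  norm_eq := hnorm
  inner_eq := by
    have hle : ∀ p ∈ s.offDiag, ⟪p.1, p.2⟫ ≤ -1 / n := fun p hp =>
      have ⟨h1, h2, hne⟩ := Finset.mem_offDiag.1 hp
      hinner h1 h2 hne
    have hconst : ∑ _p ∈ s.offDiag, (-1 / n : ℝ) ≤ -#s := by
      rw [Finset.sum_const, nsmul_eq_mul, cast_card_offDiag, hcard]
      push_cast
      field_simp
      linarith
    have heq := (Finset.sum_eq_sum_iff_of_le hle).1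
      ((Finset.sum_le_sum hle).antisymm (hconst.trans (neg_card_le_sum_offDiag_inner hnorm)))
    exact fun u hu v hv huv => heq (u, v) (Finset.mem_offDiag.2 ⟨hu, hv, huv⟩)

theorem affineIndependent_of_inner_eq {ι : Type*} {p : ι → E} {c : ℝ} (hc : c ≠ 1)
    (hnorm : ∀ i, ‖p i‖ = 1) (hinner : Pairwise fun i j => ⟪p i, p j⟫ = c) :
    AffineIndependent ℝ p := by
  classical
  refine affineIndependent_iff.2 fun t w hw0 hw i hi => ?_
  have hij (j : ι) : ⟪p j, p i⟫ = c + if j = i then 1 - c else 0 := by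
    split_ifs with h
    · rw [h, inner_self_eq_one_of_norm_eq_one (hnorm i)]
      ring
    · rw [hinner h, add_zero]
  have h : w i * (1 - c) = 0 := by
    calc w i * (1 - c) = ∑ j ∈ t, w j * ⟪p j, p i⟫ := by
          simp [hij, mul_add, Finset.sum_add_distrib, ← Finset.sum_mul, hw0, hi]
      _ = ⟪∑ j ∈ t, w j • p j, p i⟫ := by simp_rw [sum_inner, real_inner_smul_left]
      _ = 0 := by rw [hw, inner_zero_left]
  exact (mul_eq_zero.1 h).resolve_right (sub_ne_zero.2 hc.symm)

namespace IsUnitSimplex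

variable {n : ℕ} {s : Finset E}

theorem sum_eq_zero (hs : IsUnitSimplex n s) (hn : n ≠ 0) : ∑ u ∈ s, u = 0 := by
  have hoff : ∑ p ∈ s.offDiag, ⟪p.1, p.2⟫ = -#s := by
    rw [Finset.sum_congr rfl fun p hp =>
      have ⟨h1, h2, hne⟩ := Finset.mem_offDiag.1 hp
      hs.inner_eq h1 h2 hne, Finset.sum_const, nsmul_eq_mul, cast_card_offDiag, hs.card_eq]
    push_cast
    field_simp
    ring
  simpa [hoff] using norm_sum_sq_eq_card_add hs.norm_eq

theorem sum_inner_eq_zero (hs : IsUnitSimplex n s) (hn : n ≠ 0) (u : E) :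
    ∑ w ∈ s, ⟪u, w⟫ = 0 := by
  rw [← inner_sum, hs.sum_eq_zero hn, inner_zero_right]

theorem affineIndependent (hs : IsUnitSimplex n s) : AffineIndependent ℝ ((↑) : s → E) := by
  refine affineIndependent_of_inner_eq (c := -1 / n) ?_ (fun u => hs.norm_eq u u.2) fun u v huv =>
    hs.inner_eq u.2 v.2 (Subtype.coe_ne_coe.2 huv)
  have : (-1 / n : ℝ) ≤ 0 := div_nonpos_of_nonpos_of_nonneg (by norm_num) n.cast_nonneg
  linarith

theorem span_eq_top (hs : IsUnitSimplex n s) (hn : n ≠ 0) (hE : Module.finrank ℝ E = n) :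
    Submodule.span ℝ (s : Set E) = ⊤ := by
  have : FiniteDimensional ℝ E := Module.finite_of_finrank_pos (by omega)
  have htop : affineSpan ℝ (s : Set E) = ⊤ := by
    simpa using hs.affineIndependent.affineSpan_eq_top_iff_card_eq_finrank_add_one.2
      (by rw [Fintype.card_coe, hs.card_eq, hE])
  refine eq_top_iff.2 fun u _ => affineSpan_le_toAffineSubspace_span (k := ℝ) ?_
  rw [htop]
  trivial

theorem sum_inner_smul (hs : IsUnitSimplex n s) (hn : n ≠ 0) (hE : Module.finrank ℝ E = n)
    (u : E) : ∑ w ∈ s, ⟪u, w⟫ • w = (1 + 1 / n : ℝ) • u := by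
  classical
  have hu : u ∈ Submodule.span ℝ (s : Set E) := hs.span_eq_top hn hE ▸ Submodule.mem_top
  induction hu using Submodule.span_induction with
  | mem u hu =>
    have hterm : ∀ w ∈ s, ⟪u, w⟫ • w =
        (if u = w then (1 + 1 / n : ℝ) • w else 0) + (-1 / n : ℝ) • w := by
      intro w hw
      split_ifs with h
      · rw [← h, inner_self_eq_one_of_norm_eq_one (hs.norm_eq u hu), ← add_smul]
        ring_nf
      · rw [hs.inner_eq hu hw h, zero_add]
    rw [Finset.sum_congr rfl hterm, Finset.sum_add_distrib, Finset.sum_ite_eq,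
      if_pos (Finset.mem_coe.1 hu), ← Finset.smul_sum, hs.sum_eq_zero hn, smul_zero, add_zero]
  | zero => simp
  | add a b _ _ ha hb =>
    simp only [inner_add_left, add_smul, Finset.sum_add_distrib, ha, hb, smul_add]
  | smul c a _ ha =>
    simp only [real_inner_smul_left, mul_smul, ← Finset.smul_sum, ha, smul_comm _ c]

theorem sum_inner_mul_inner (hs : IsUnitSimplex n s) (hn : n ≠ 0) (hE : Module.finrank ℝ E = n)
    (u v : E) : ∑ w ∈ s, ⟪u, w⟫ * ⟪w, v⟫ = (1 + 1 / n) * ⟪u, v⟫ := by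
  simp_rw [← real_inner_smul_left, ← sum_inner, hs.sum_inner_smul hn hE]

end IsUnitSimplex

end RegularSimplex

section Shell

variable {E : Type*} [NormedAddCommGroup E] [InnerProductSpace ℝ E]

theorem wAngle_eq_sub_mul_val (i : Fin 3) : wAngle i = (8 - 11 * (i : ℕ)) / 30 := by
  fin_cases i <;> norm_num [wAngle, α1, α2, α3]

theorem wAngle_injective : Function.Injective wAngle := by
  intro i j h
  rw [wAngle_eq_sub_mul_val, wAngle_eq_sub_mul_val] at h
  exact Fin.ext (by exact_mod_cast (by linarith : ((i : ℕ) : ℝ) = (j : ℕ)))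

theorem wAngle_ne_one (i : Fin 3) : wAngle i ≠ 1 := by
  fin_cases i <;> norm_num [wAngle, α1, α2, α3]

theorem range_wAngle : Set.range wAngle = {α1, α2, α3} := by
  simp only [wAngle, Matrix.range_cons, Matrix.range_empty, Set.union_empty, Set.singleton_union]

theorem wAngle_one : wAngle 1 = -1 / ((10 : ℕ) : ℝ) := by
  norm_num [wAngle, α2]

/-- A set of unit vectors whose pairwise inner products are among `α1`, `α2`, `α3`. -/
structure IsThreeAngleSet (X : Set E) : Prop where
  norm_eq : ∀ u ∈ X, ‖u‖ = 1
  inner_mem : X.Pairwise fun u v => ⟪u, v⟫ ∈ Set.range wAngle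

/-- The shell of index `i` of `s` around `u`: the vectors of `s` at the `i`-th angle to `u`. In the
association scheme carried by `s`, these are the `i`-th associates of `u`, with indices
starting from `0`. -/
def shell (s : Finset E) (u : E) (i : Fin 3) : Finset E :=
  {w ∈ s | ⟪u, w⟫ = wAngle i}

theorem mem_shell {s : Finset E} {u w : E} {i : Fin 3} :
    w ∈ shell s u i ↔ w ∈ s ∧ ⟪u, w⟫ = wAngle i :=
  Finset.mem_filter

theorem shell_subset (s : Finset E) (u : E) (i : Fin 3) : shell s u i ⊆ s :=
  Finset.filter_subset _ _

theorem shell_comm (s : Finset E) (u v : E) (i j : Fin 3) :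
    shell (shell s u i) v j = shell (shell s v j) u i :=
  Finset.filter_comm _ _ s

theorem notMem_shell_self (s : Finset E) {u : E} (hu : ‖u‖ = 1) (i : Fin 3) :
    u ∉ shell s u i := fun h =>
  wAngle_ne_one i ((mem_shell.1 h).2.symm.trans (inner_self_eq_one_of_norm_eq_one hu))

theorem sum_sum_shell_comm {M : Type*} [AddCommMonoid M] (s t : Finset E) (i : Fin 3)
    (f : E → E → M) :
    ∑ u ∈ s, ∑ w ∈ shell t u i, f u w = ∑ w ∈ t, ∑ u ∈ shell s w i, f u w := by
  refine Finset.sum_comm' fun u w => ?_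
  rw [mem_shell, mem_shell, real_inner_comm]
  tauto

theorem sum_card_shell_comm (s t : Finset E) (i : Fin 3) :
    ∑ u ∈ s, #(shell t u i) = ∑ w ∈ t, #(shell s w i) := by
  simpa using sum_sum_shell_comm s t i fun _ _ => (1 : ℕ)

theorem sum_eq_ite_add_sum_shell [DecidableEq E] {M : Type*} [AddCommMonoid M] {s : Finset E}
    {u : E} (hu : ‖u‖ = 1) (h : ∀ w ∈ s, w ≠ u → ⟪u, w⟫ ∈ Set.range wAngle) (g : E → M) :
    ∑ w ∈ s, g w = (if u ∈ s then g u else 0) + ∑ i, ∑ w ∈ shell s u i, g w := by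
  have hshell (i : Fin 3) : shell (s.erase u) u i = shell s u i := by
    rw [shell, Finset.filter_erase]
    exact Finset.erase_eq_of_notMem (notMem_shell_self s hu i)
  have herase : ∑ w ∈ s.erase u, g w = ∑ i, ∑ w ∈ shell s u i, g w := by
    have hmaps : ∀ w ∈ s.erase u, ⟪u, w⟫ ∈ Finset.univ.image wAngle := fun w hw => by
      simpa using h w (Finset.mem_of_mem_erase hw) (Finset.ne_of_mem_erase hw)
    simp_rw [← hshell, shell]
    rw [← Finset.sum_fiberwise_of_maps_to hmaps, Finset.sum_image wAngle_injective.injOn]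
  rw [← herase]
  split_ifs with hus
  · exact (Finset.add_sum_erase s g hus).symm
  · rw [Finset.erase_eq_of_notMem hus, zero_add]

theorem card_eq_ite_add_sum_card_shell [DecidableEq E] {s : Finset E} {u : E}
    (hu : ‖u‖ = 1) (h : ∀ w ∈ s, w ≠ u → ⟪u, w⟫ ∈ Set.range wAngle) :
    #s = (if u ∈ s then 1 else 0) + ∑ i, #(shell s u i) := by
  simpa using sum_eq_ite_add_sum_shell hu h fun _ => (1 : ℕ)

theorem sum_apply_inner_eq_ite_add_sum_shell [DecidableEq E] {s : Finset E} {u : E}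
    (hu : ‖u‖ = 1) (h : ∀ w ∈ s, w ≠ u → ⟪u, w⟫ ∈ Set.range wAngle) (F : ℝ → ℝ) :
    ∑ w ∈ s, F ⟪u, w⟫ = (if u ∈ s then F 1 else 0) + ∑ i, #(shell s u i) * F (wAngle i) := by
  rw [sum_eq_ite_add_sum_shell hu h, inner_self_eq_one_of_norm_eq_one hu]
  congr! 2 with i
  rw [Finset.sum_congr rfl fun w hw => by rw [(mem_shell.1 hw).2], Finset.sum_const, nsmul_eq_mul]

/-- The affine function sending the `i`-th admissible angle to its index `i`. -/
def angleIndex (t : ℝ) : ℝ :=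
  (8 - 30 * t) / 11

theorem angleIndex_wAngle (i : Fin 3) : angleIndex (wAngle i) = (i : ℕ) := by
  rw [angleIndex, wAngle_eq_sub_mul_val]
  ring

theorem angleIndex_one : angleIndex 1 = -2 := by
  norm_num [angleIndex]

theorem sum_angleIndex_mul_angleIndex {s : Finset E} (hs : ∑ w ∈ s, w = 0) (u v : E) :
    121 * ∑ w ∈ s, angleIndex ⟪u, w⟫ * angleIndex ⟪v, w⟫ =
      64 * #s + 900 * ∑ w ∈ s, ⟪u, w⟫ * ⟪w, v⟫ := by
  have hterm (w : E) : 121 * (angleIndex ⟪u, w⟫ * angleIndex ⟪v, w⟫) =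
      64 - 240 * ⟪u, w⟫ - 240 * ⟪v, w⟫ + 900 * (⟪u, w⟫ * ⟪w, v⟫) := by
    rw [real_inner_comm v w, angleIndex, angleIndex]
    ring
  have hzero (a : E) : ∑ w ∈ s, ⟪a, w⟫ = 0 := by rw [← inner_sum, hs, inner_zero_right]
  simp only [Finset.mul_sum, hterm, Finset.sum_add_distrib, Finset.sum_sub_distrib]
  simp only [← Finset.mul_sum, hzero, Finset.sum_const, nsmul_eq_mul]
  ring

theorem sum_card_shell_shell_mul [DecidableEq E] {s : Finset E} {u v : E} {j : Fin 3}
    (hu : ‖u‖ = 1) (hv : ‖v‖ = 1) (huv : ⟪u, v⟫ = wAngle j)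
    (hsu : ∀ w ∈ s, w ≠ u → ⟪u, w⟫ ∈ Set.range wAngle)
    (hsv : ∀ w ∈ s, w ≠ v → ⟪v, w⟫ ∈ Set.range wAngle) :
    ∑ k : Fin 3, ∑ l : Fin 3, #(shell (shell s u k) v l) * ((k : ℕ) * (l : ℕ) : ℝ) =
      ∑ w ∈ s, angleIndex ⟪u, w⟫ * angleIndex ⟪v, w⟫ +
        2 * (j : ℕ) * ((if u ∈ s then 1 else 0) + if v ∈ s then 1 else 0) := by
  have hshell (k : Fin 3) : ∑ w ∈ shell s u k, angleIndex ⟪u, w⟫ * angleIndex ⟪v, w⟫ = (k : ℕ) *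
      ((if v ∈ shell s u k then -2 else 0) +
        ∑ l : Fin 3, (#(shell (shell s u k) v l) * (l : ℕ) : ℝ)) := by
    rw [Finset.sum_congr rfl fun w hw => by rw [(mem_shell.1 hw).2, angleIndex_wAngle],
      ← Finset.mul_sum, sum_apply_inner_eq_ite_add_sum_shell hv fun w hw =>
        hsv w (shell_subset s u k hw)]
    simp only [angleIndex_wAngle, angleIndex_one]
  have hv_sum : ∑ k : Fin 3, ((k : ℕ) : ℝ) * (if v ∈ shell s u k then -2 else 0) =
      -2 * (j : ℕ) * if v ∈ s then 1 else 0 := by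
    by_cases hvs : v ∈ s <;> simp [mem_shell, huv, wAngle_injective.eq_iff, hvs, mul_comm]
  rw [sum_eq_ite_add_sum_shell hu hsu, inner_self_eq_one_of_norm_eq_one hu, real_inner_comm,
    huv, angleIndex_wAngle, angleIndex_one]
  simp only [hshell, mul_add, Finset.sum_add_distrib, hv_sum, Finset.mul_sum]
  simp only [mul_left_comm]
  split_ifs <;> ring

namespace IsUnitSimplex

variable {S : Finset E}

theorem inner_eq_wAngle_one (hS : IsUnitSimplex 10 S) {u v : E} (hu : u ∈ S) (hv : v ∈ S)
    (huv : u ≠ v) : ⟪u, v⟫ = wAngle 1 :=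
  (hS.inner_eq hu hv huv).trans wAngle_one.symm

theorem shell_of_mem [DecidableEq E] (hS : IsUnitSimplex 10 S) {u : E} (hu : u ∈ S) (i : Fin 3) :
    shell S u i = if i = 1 then S.erase u else ∅ := by
  ext w
  by_cases hw : w ∈ S.erase u
  · have hwS := Finset.mem_of_mem_erase hw
    rw [mem_shell, hS.inner_eq_wAngle_one hu hwS (Finset.ne_of_mem_erase hw).symm,
      wAngle_injective.eq_iff]
    split_ifs with hi
    · simp [hw, hwS, hi]
    · simp [Ne.symm hi]
  · have hshell : w ∉ shell S u i := fun h => hw <|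
      Finset.mem_erase.2 ⟨fun e => notMem_shell_self S (hS.norm_eq u hu) i (e ▸ h),
        shell_subset S u i h⟩
    split_ifs <;> simp [hshell, hw]

theorem card_shell_of_mem (hS : IsUnitSimplex 10 S) {u : E} (hu : u ∈ S) (i : Fin 3) :
    #(shell S u i) = ![0, 10, 0] i := by
  classical
  rw [hS.shell_of_mem hu]
  fin_cases i <;> simp [Finset.card_erase_of_mem hu, hS.card_eq]

/-- The three multiplicities are determined by their sum, by the centroid of the simplex being `0`,
and by the simplex being a tight frame. -/
theorem card_shell_of_notMem (hS : IsUnitSimplex 10 S) (hE : Module.finrank ℝ E = 10) {u : E}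
    (hu : ‖u‖ = 1) (huS : u ∉ S) (h : ∀ w ∈ S, ⟪u, w⟫ ∈ Set.range wAngle) (i : Fin 3) :
    #(shell S u i) = ![6, 2, 3] i := by
  classical
  have h' : ∀ w ∈ S, w ≠ u → ⟪u, w⟫ ∈ Set.range wAngle := fun w hw _ => h w hw
  have hcard := card_eq_ite_add_sum_card_shell hu h'
  have hcentroid := sum_apply_inner_eq_ite_add_sum_shell hu h' fun t => t
  have hframe := sum_apply_inner_eq_ite_add_sum_shell hu h' fun t => t * t
  have hframe' := hS.sum_inner_mul_inner (by norm_num) hE u u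
  simp_rw [fun w => real_inner_comm u w] at hframe'
  rw [hframe', inner_self_eq_one_of_norm_eq_one hu] at hframe
  rw [hS.sum_inner_eq_zero (by norm_num)] at hcentroid
  rw [hS.card_eq] at hcard
  rify at hcard
  norm_num [huS, Fin.sum_univ_three, wAngle_eq_sub_mul_val] at hcard hcentroid hframe
  have h0 : (#(shell S u 0) : ℝ) = 6 := by linarith
  have h1 : (#(shell S u 1) : ℝ) = 2 := by linarith
  have h2 : (#(shell S u 2) : ℝ) = 3 := by linarith
  norm_cast at h0 h1 h2
  fin_cases i <;> assumption

end IsUnitSimplex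

end Shell

section Companions

variable {E : Type*} [NormedAddCommGroup E] [InnerProductSpace ℝ E] {X S : Finset E}

namespace IsThreeAngleSet

theorem inner_mem_range (hX : IsThreeAngleSet (X : Set E)) {s : Finset E} (hs : s ⊆ X) {u : E}
    (hu : u ∈ X) : ∀ w ∈ s, w ≠ u → ⟪u, w⟫ ∈ Set.range wAngle :=
  fun _ hw hwu => hX.inner_mem hu (hs hw) hwu.symm

theorem card_shell_simplex (hX : IsThreeAngleSet (X : Set E)) (hSX : S ⊆ X)
    (hS : IsUnitSimplex 10 S) (hE : Module.finrank ℝ E = 10) {u : E} (hu : u ∈ X) (huS : u ∉ S)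
    (i : Fin 3) : #(shell S u i) = ![6, 2, 3] i :=
  hS.card_shell_of_notMem hE (hX.norm_eq u hu) huS
    (fun w hw => hX.inner_mem_range hSX hu w hw fun h => huS (h ▸ hw)) i

variable [DecidableEq E]

theorem sum_card_shell_simplex_shell_mul (hX : IsThreeAngleSet (X : Set E)) (hSX : S ⊆ X)
    (hS : IsUnitSimplex 10 S) (hE : Module.finrank ℝ E = 10) {u v : E} (hu : u ∈ X \ S)
    (hv : v ∈ X \ S) {j : Fin 3} (huv : ⟪u, v⟫ = wAngle j) :
    ∑ k : Fin 3, ∑ l : Fin 3, #(shell (shell S u k) v l) * (k * l : ℕ) + 3 * (j : ℕ) = 8 := by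
  obtain ⟨⟨huX, huS⟩, hvX, hvS⟩ := And.intro (Finset.mem_sdiff.1 hu) (Finset.mem_sdiff.1 hv)
  have h := sum_card_shell_shell_mul (hX.norm_eq u huX) (hX.norm_eq v hvX) huv
    (hX.inner_mem_range hSX huX) (hX.inner_mem_range hSX hvX)
  have hindex := sum_angleIndex_mul_angleIndex (hS.sum_eq_zero (by norm_num)) u v
  rw [if_neg huS, if_neg hvS] at h
  rw [hS.sum_inner_mul_inner (by norm_num) hE, hS.card_eq, huv, wAngle_eq_sub_mul_val] at hindex
  have h8 : ∑ k : Fin 3, ∑ l : Fin 3, #(shell (shell S u k) v l) * ((k : ℕ) * (l : ℕ) : ℝ) +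
      3 * (j : ℕ) = 8 := by
    push_cast at hindex
    linarith
  exact_mod_cast h8

theorem card_shell_one_shell_one_eq_one_iff (hX : IsThreeAngleSet (X : Set E)) (hSX : S ⊆ X)
    (hS : IsUnitSimplex 10 S) (hE : Module.finrank ℝ E = 10) {u v : E} (hu : u ∈ X \ S)
    (hv : v ∈ X \ S) (huv : u ≠ v) :
    #(shell (shell S u 1) v 1) = 1 ↔ ⟪u, v⟫ = wAngle 1 := by
  obtain ⟨⟨huX, huS⟩, hvX, -⟩ := And.intro (Finset.mem_sdiff.1 hu) (Finset.mem_sdiff.1 hv)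
  obtain ⟨j, hj⟩ := hX.inner_mem huX hvX huv
  have hsum := hX.sum_card_shell_simplex_shell_mul hSX hS hE hu hv hj.symm
  have hle := Finset.card_le_card (shell_subset (shell S u 1) v 1)
  rw [hX.card_shell_simplex hSX hS hE huX huS] at hle
  rw [← hj, wAngle_injective.eq_iff]
  simp only [Fin.sum_univ_three] at hsum
  fin_cases j <;> simp at hsum hle ⊢ <;> omega

theorem inner_le_of_mem_shell (hX : IsThreeAngleSet (X : Set E)) (hSX : S ⊆ X)
    (hS : IsUnitSimplex 10 S) (hE : Module.finrank ℝ E = 10) {z u v : E} (hz : z ∈ S)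
    (hu : u ∈ shell (X \ S) z 1) (hv : v ∈ shell (X \ S) z 1) (huv : u ≠ v) :
    ⟪u, v⟫ ≤ wAngle 1 := by
  rw [mem_shell, real_inner_comm] at hu hv
  obtain ⟨⟨huXS, hzu⟩, hvXS, hzv⟩ := And.intro hu hv
  obtain ⟨⟨huX, huS⟩, hvX, hvS⟩ :=
    And.intro (Finset.mem_sdiff.1 huXS) (Finset.mem_sdiff.1 hvXS)
  obtain ⟨j, hj⟩ := hX.inner_mem huX hvX huv
  have hsum := hX.sum_card_shell_simplex_shell_mul hSX hS hE huXS hvXS hj.symm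
  have hrow := card_eq_ite_add_sum_card_shell (hX.norm_eq v hvX)
    (hX.inner_mem_range ((shell_subset S u 1).trans hSX) hvX)
  have hcol := card_eq_ite_add_sum_card_shell (hX.norm_eq u huX)
    (hX.inner_mem_range ((shell_subset S v 1).trans hSX) huX)
  rw [hX.card_shell_simplex hSX hS hE huX huS] at hrow
  rw [hX.card_shell_simplex hSX hS hE hvX hvS] at hcol
  have hpos : 0 < #(shell (shell S u 1) v 1) :=
    Finset.card_pos.2 ⟨z, mem_shell.2 ⟨mem_shell.2 ⟨hz, hzu⟩, hzv⟩⟩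
  simp only [Fin.sum_univ_three, shell_comm S v u] at hsum hrow hcol
  have hj0 : 1 ≤ (j : ℕ) := by
    by_contra! h
    simp [Nat.lt_one_iff.1 h] at hsum hrow hcol
    omega
  have hj1 : (1 : ℝ) ≤ (j : ℕ) := by exact_mod_cast hj0
  rw [← hj, wAngle_eq_sub_mul_val, wAngle_eq_sub_mul_val]
  norm_num
  linarith

end IsThreeAngleSet

/-- The second simplex of `X` through the vertex `z` of the simplex `S`: the vertex `z` together
with the vectors of `X` outside `S` at inner product `-1/10` to `z`. -/
def companion [DecidableEq E] (S X : Finset E) (z : E) : Finset E :=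
  insert z (shell (X \ S) z 1)

section

variable [DecidableEq E]

theorem card_companion {z : E} (hz : z ∈ S) :
    #(companion S X z) = #(shell (X \ S) z 1) + 1 :=
  Finset.card_insert_of_notMem fun h => (Finset.mem_sdiff.1 (mem_shell.1 h).1).2 hz

theorem companion_subset (hSX : S ⊆ X) {z : E} (hz : z ∈ S) : companion S X z ⊆ X :=
  Finset.insert_subset (hSX hz) ((shell_subset _ z 1).trans Finset.sdiff_subset)

theorem mem_companion_iff {w z : E} (hw : w ∈ X \ S) (hz : z ∈ S) :
    w ∈ companion S X z ↔ z ∈ shell S w 1 := by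
  have hwz : w ≠ z := fun h => (Finset.mem_sdiff.1 hw).2 (h ▸ hz)
  rw [companion, Finset.mem_insert, mem_shell, mem_shell, real_inner_comm]
  tauto

theorem companion_inter_companion_subset_sdiff {z z' : E} (hz : z ∈ S) (hz' : z' ∈ S)
    (hne : z ≠ z') : companion S X z ∩ companion S X z' ⊆ X \ S := by
  intro w
  simp only [companion, Finset.mem_inter, Finset.mem_insert, mem_shell]
  rintro ⟨rfl | h, rfl | h'⟩
  · exact absurd rfl hne
  · exact absurd hz (Finset.mem_sdiff.1 h'.1).2
  · exact absurd hz' (Finset.mem_sdiff.1 h.1).2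
  · exact h.1

end

namespace IsThreeAngleSet

variable [DecidableEq E]

theorem companion_pairwise_inner_le (hX : IsThreeAngleSet (X : Set E)) (hSX : S ⊆ X)
    (hS : IsUnitSimplex 10 S) (hE : Module.finrank ℝ E = 10) {z : E} (hz : z ∈ S) :
    (companion S X z : Set E).Pairwise fun u v => ⟪u, v⟫ ≤ -1 / (10 : ℕ) := by
  rw [← wAngle_one, companion, Finset.coe_insert, Set.pairwise_insert]
  exact ⟨fun u hu v hv => hX.inner_le_of_mem_shell hSX hS hE hz hu hv,
    fun u hu _ => ⟨(mem_shell.1 hu).2.le, (real_inner_comm z u).trans_le (mem_shell.1 hu).2.le⟩⟩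

theorem isUnitSimplex_companion (hX : IsThreeAngleSet (X : Set E)) (hSX : S ⊆ X)
    (hS : IsUnitSimplex 10 S) (hE : Module.finrank ℝ E = 10) (hcard : #X = 66) {z : E}
    (hz : z ∈ S) : IsUnitSimplex 10 (companion S X z) := by
  have hnorm {z : E} (hz : z ∈ S) : ∀ u ∈ companion S X z, ‖u‖ = 1 := fun u hu =>
    hX.norm_eq u (companion_subset hSX hz hu)
  have hle : ∀ z ∈ S, #(shell (X \ S) z 1) ≤ 10 := fun z hz =>
    Nat.le_of_succ_le_succ <| (card_companion hz).symm.trans_le <|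
      card_le_of_inner_le_neg_inv (by norm_num) (hnorm hz)
        (hX.companion_pairwise_inner_le hSX hS hE hz)
  have hsum : ∑ z ∈ S, #(shell (X \ S) z 1) = ∑ _z ∈ S, 10 := by
    calc ∑ z ∈ S, #(shell (X \ S) z 1) = ∑ y ∈ X \ S, #(shell S y 1) :=
          sum_card_shell_comm S (X \ S) 1
      _ = ∑ _y ∈ X \ S, 2 := Finset.sum_congr rfl fun y hy =>
          hX.card_shell_simplex hSX hS hE (Finset.mem_sdiff.1 hy).1 (Finset.mem_sdiff.1 hy).2 1
      _ = ∑ _z ∈ S, 10 := by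
          simp [Finset.card_sdiff_of_subset hSX, hcard, hS.card_eq]
  have heq := (Finset.sum_eq_sum_iff_of_le hle).1 hsum
  exact isUnitSimplex_of_inner_le_neg_inv (by norm_num) (by rw [card_companion hz, heq z hz])
    (hnorm hz) (hX.companion_pairwise_inner_le hSX hS hE hz)

end IsThreeAngleSet

/-- The simplices `P` and `Q` meet in `v` only, and together they exhaust the vectors of `X` at
inner product `-1/10` to `v`. -/
structure IsSimplexPair [DecidableEq E] (X : Finset E) (v : E) (P Q : Finset E) : Prop where
  left : IsUnitSimplex 10 P
  right : IsUnitSimplex 10 Q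
  inter_eq : P ∩ Q = {v}
  union_eq : P ∪ Q = insert v (shell X v 1)

namespace IsThreeAngleSet

variable [DecidableEq E]

theorem isSimplexPair_companion (hX : IsThreeAngleSet (X : Set E)) (hSX : S ⊆ X)
    (hS : IsUnitSimplex 10 S) (hE : Module.finrank ℝ E = 10) (hcard : #X = 66) {z : E}
    (hz : z ∈ S) : IsSimplexPair X z S (companion S X z) where
  left := hS
  right := hX.isUnitSimplex_companion hSX hS hE hcard hz
  inter_eq := by
    ext w
    simp only [companion, Finset.mem_inter, Finset.mem_insert, mem_shell, Finset.mem_sdiff,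
      Finset.mem_singleton]
    aesop
  union_eq := by
    ext w
    have hSz : w ∈ S → z ≠ w → ⟪z, w⟫ = wAngle 1 := hS.inner_eq_wAngle_one hz
    simp only [companion, Finset.mem_union, Finset.mem_insert, mem_shell, Finset.mem_sdiff]
    have := @hSX w
    tauto

theorem companion_inter_companion (hX : IsThreeAngleSet (X : Set E)) (hSX : S ⊆ X)
    (hS : IsUnitSimplex 10 S) (hE : Module.finrank ℝ E = 10) (hcard : #X = 66) {y z z' : E}
    (hy : y ∈ X \ S) (hne : z ≠ z') (hyz : shell S y 1 = {z, z'}) :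
    companion S X z ∩ companion S X z' = {y} := by
  have hz : z ∈ S := shell_subset S y 1 (by simp [hyz])
  have hz' : z' ∈ S := shell_subset S y 1 (by simp [hyz])
  have hyP : y ∈ companion S X z := (mem_companion_iff hy hz).2 (by simp [hyz])
  have hyQ : y ∈ companion S X z' := (mem_companion_iff hy hz').2 (by simp [hyz])
  refine Finset.eq_singleton_iff_unique_mem.2 ⟨Finset.mem_inter.2 ⟨hyP, hyQ⟩, fun w hw => ?_⟩
  have hwXS := companion_inter_companion_subset_sdiff hz hz' hne hw
  obtain ⟨hwP, hwQ⟩ := Finset.mem_inter.1 hw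
  by_contra hwy
  have hone : #(shell (shell S y 1) w 1) = 1 :=
    (hX.card_shell_one_shell_one_eq_one_iff hSX hS hE hy hwXS (Ne.symm hwy)).2 <|
      (hX.isUnitSimplex_companion hSX hS hE hcard hz).inner_eq_wAngle_one hyP hwP (Ne.symm hwy)
  have htwo : shell (shell S y 1) w 1 = {z, z'} := by
    rw [shell, hyz, Finset.filter_true_of_mem]
    simpa using ⟨(mem_shell.1 ((mem_companion_iff hwXS hz).1 hwP)).2,
      (mem_shell.1 ((mem_companion_iff hwXS hz').1 hwQ)).2⟩
  rw [htwo, Finset.card_pair hne] at hone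
  omega

theorem companion_union_companion (hX : IsThreeAngleSet (X : Set E)) (hSX : S ⊆ X)
    (hS : IsUnitSimplex 10 S) (hE : Module.finrank ℝ E = 10) (hcard : #X = 66) {y z z' : E}
    (hy : y ∈ X \ S) (hyz : shell S y 1 = {z, z'}) :
    companion S X z ∪ companion S X z' = insert y (shell X y 1) := by
  have hz : z ∈ S := shell_subset S y 1 (by simp [hyz])
  have hz' : z' ∈ S := shell_subset S y 1 (by simp [hyz])
  have hsub {a : E} (ha : a ∈ S) (hay : a ∈ shell S y 1) :
      companion S X a ⊆ insert y (shell X y 1) := fun w hw => by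
    rw [Finset.mem_insert, mem_shell, or_iff_not_imp_left]
    exact fun hwy => ⟨companion_subset hSX ha hw,
      (hX.isUnitSimplex_companion hSX hS hE hcard ha).inner_eq_wAngle_one
        ((mem_companion_iff hy ha).2 hay) hw (Ne.symm hwy)⟩
  refine (Finset.union_subset (hsub hz (by simp [hyz])) (hsub hz' (by simp [hyz]))).antisymm
    (Finset.insert_subset ?_ fun w hw => ?_)
  · exact Finset.mem_union_left _ ((mem_companion_iff hy hz).2 (by simp [hyz]))
  obtain ⟨hwX, hyw⟩ := mem_shell.1 hw
  suffices ∃ a ∈ shell S y 1, w ∈ companion S X a by simpa [hyz] using this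
  by_cases hwS : w ∈ S
  · exact ⟨w, mem_shell.2 ⟨hwS, hyw⟩, Finset.mem_insert_self _ _⟩
  have hwXS := Finset.mem_sdiff.2 ⟨hwX, hwS⟩
  have hne : y ≠ w := fun h => notMem_shell_self X (hX.norm_eq w hwX) 1 (h ▸ hw)
  obtain ⟨a, ha⟩ := Finset.card_pos.1 <| Nat.lt_of_lt_of_eq Nat.zero_lt_one
    ((hX.card_shell_one_shell_one_eq_one_iff hSX hS hE hy hwXS hne).2 hyw).symm
  rw [mem_shell] at ha
  have haS := shell_subset S y 1 ha.1
  exact ⟨a, ha.1, (mem_companion_iff hwXS haS).2 (mem_shell.2 ⟨haS, ha.2⟩)⟩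

theorem exists_isSimplexPair (hX : IsThreeAngleSet (X : Set E)) (hSX : S ⊆ X)
    (hS : IsUnitSimplex 10 S) (hE : Module.finrank ℝ E = 10) (hcard : #X = 66) {v : E}
    (hv : v ∈ X) : ∃ P Q, IsSimplexPair X v P Q := by
  by_cases hvS : v ∈ S
  · exact ⟨_, _, hX.isSimplexPair_companion hSX hS hE hcard hvS⟩
  obtain ⟨z, z', hne, hvz⟩ := Finset.card_eq_two.1 (hX.card_shell_simplex hSX hS hE hv hvS 1)
  have hvXS := Finset.mem_sdiff.2 ⟨hv, hvS⟩
  exact ⟨_, _, hX.isUnitSimplex_companion hSX hS hE hcard (shell_subset S v 1 (by simp [hvz])),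
    hX.isUnitSimplex_companion hSX hS hE hcard (shell_subset S v 1 (by simp [hvz])),
    hX.companion_inter_companion hSX hS hE hcard hvXS hne hvz,
    hX.companion_union_companion hSX hS hE hcard hvXS hvz⟩

end IsThreeAngleSet

end Companions

section Counting

variable {E : Type*} [NormedAddCommGroup E] [InnerProductSpace ℝ E] [DecidableEq E]
  {X P Q : Finset E} {v : E}

namespace IsSimplexPair

theorem sum_add_sum {M : Type*} [AddCommMonoid M] (h : IsSimplexPair X v P Q) (hv : ‖v‖ = 1)
    (g : E → M) : ∑ w ∈ P, g w + ∑ w ∈ Q, g w = ∑ w ∈ shell X v 1, g w + 2 • g v := by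
  rw [← Finset.sum_union_inter, h.union_eq, h.inter_eq, Finset.sum_singleton,
    Finset.sum_insert (notMem_shell_self X hv 1), two_nsmul]
  abel

theorem card_shell (h : IsSimplexPair X v P Q) (hv : ‖v‖ = 1) : #(shell X v 1) = 20 := by
  have hcard := h.sum_add_sum hv fun _ => 1
  simp only [Finset.sum_const, smul_eq_mul, h.left.card_eq, h.right.card_eq] at hcard
  omega

theorem card_shell_add_card_shell (h : IsSimplexPair X v P Q) (hv : ‖v‖ = 1) (u : E) (i : Fin 3) :
    #(shell P u i) + #(shell Q u i) =
      #(shell (shell X v 1) u i) + 2 * if ⟪u, v⟫ = wAngle i then 1 else 0 := by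
  simp only [shell, Finset.card_filter]
  exact h.sum_add_sum hv _

theorem subset_left (h : IsSimplexPair X v P Q) (hv : v ∈ X) : P ⊆ X :=
  Finset.subset_union_left.trans <|
    h.union_eq.trans_subset (Finset.insert_subset hv (shell_subset X v 1))

theorem subset_right (h : IsSimplexPair X v P Q) (hv : v ∈ X) : Q ⊆ X :=
  Finset.subset_union_right.trans <|
    h.union_eq.trans_subset (Finset.insert_subset hv (shell_subset X v 1))

theorem card_shell_one_shell (hX : IsThreeAngleSet (X : Set E)) (hE : Module.finrank ℝ E = 10)
    (h : IsSimplexPair X v P Q) (hv : v ∈ X) {u : E} (hu : u ∈ X) {k : Fin 3}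
    (huv : ⟪u, v⟫ = wAngle k) (i : Fin 3) :
    #(shell (shell X v 1) u i) + 2 * (if k = i then 1 else 0) =
      if k = 1 then ![6, 12, 3] i else ![12, 4, 6] i := by
  have hne : u ≠ v := fun e => notMem_shell_self X (hX.norm_eq u hu) k (mem_shell.2 ⟨hu, e ▸ huv⟩)
  have hunion : u ∈ P ∪ Q ↔ k = 1 := by
    rw [h.union_eq, Finset.mem_insert, mem_shell, real_inner_comm, huv, wAngle_injective.eq_iff]
    tauto
  have hinter : u ∉ P ∩ Q := by rwa [h.inter_eq, Finset.mem_singleton]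
  have hnotMem {S : Finset E} (hS : IsUnitSimplex 10 S) (hSX : S ⊆ X) (huS : u ∉ S) :=
    hX.card_shell_simplex hSX hS hE hu huS i
  simp_rw [← wAngle_injective.eq_iff (a := k) (b := i), ← huv]
  rw [← h.card_shell_add_card_shell (hX.norm_eq v hv)]
  rw [Finset.mem_union] at hunion
  rw [Finset.mem_inter] at hinter
  by_cases huP : u ∈ P
  · have huQ : u ∉ Q := fun huQ => hinter ⟨huP, huQ⟩
    rw [if_pos (hunion.1 (.inl huP)), h.left.card_shell_of_mem huP,
      hnotMem h.right (h.subset_right hv) huQ]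
    fin_cases i <;> rfl
  · rw [hnotMem h.left (h.subset_left hv) huP]
    by_cases huQ : u ∈ Q
    · rw [if_pos (hunion.1 (.inr huQ)), h.right.card_shell_of_mem huQ]
      fin_cases i <;> rfl
    · rw [if_neg fun hk => (hunion.2 hk).elim huP huQ, hnotMem h.right (h.subset_right hv) huQ]
      fin_cases i <;> rfl

end IsSimplexPair

theorem eq_wP_of_sums {N : Fin 3 → Fin 3 → ℕ} {k : Fin 3}
    (hrow : ∀ i, ∑ j, N i j + (if k = i then 1 else 0) = ![30, 20, 15] i)
    (hcol : ∀ j, ∑ i, N i j + (if k = j then 1 else 0) = ![30, 20, 15] j)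
    (hrow1 : ∀ j, N 1 j + 2 * (if k = j then 1 else 0) =
      if k = 1 then ![6, 12, 3] j else ![12, 4, 6] j)
    (hcol1 : ∀ i, N i 1 + 2 * (if k = i then 1 else 0) =
      if k = 1 then ![6, 12, 3] i else ![12, 4, 6] i)
    (hindex : ∑ i : Fin 3, ∑ j : Fin 3, N i j * (i * j : ℕ) + 14 * (k : ℕ) = 48) (i j : Fin 3) :
    N i j = wP k i j := by
  have hrow0 := hrow 0
  have hcol0 := hcol 0
  have hcol2 := hcol 2
  have h10 := hrow1 0
  have h11 := hrow1 1
  have h12 := hrow1 2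
  have h01 := hcol1 0
  have h21 := hcol1 2
  simp only [Fin.sum_univ_three] at hrow0 hcol0 hcol2 hindex
  clear hrow hcol hrow1 hcol1
  fin_cases k <;> fin_cases i <;> fin_cases j <;> simp [wP] at * <;> omega

namespace IsThreeAngleSet

variable (hX : IsThreeAngleSet (X : Set E)) (hpair : ∀ v ∈ X, ∃ P Q, IsSimplexPair X v P Q)
include hX hpair

theorem card_shell_one (hv : v ∈ X) : #(shell X v 1) = 20 :=
  have ⟨_, _, h⟩ := hpair v hv
  h.card_shell (hX.norm_eq v hv)

theorem sum_sum_shell_one {M : Type*} [AddCommMonoid M] (g : E → M) :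
    ∑ v ∈ X, ∑ w ∈ shell X v 1, g w = 20 • ∑ w ∈ X, g w := by
  rw [sum_sum_shell_comm X X 1 fun _ w => g w, Finset.smul_sum]
  exact Finset.sum_congr rfl fun w hw => by
    rw [Finset.sum_const, hX.card_shell_one hpair hw]

theorem nsmul_sum_eq_of_forall_isUnitSimplex {M : Type*} [AddCommMonoid M] {g : E → M} {c : M}
    (hg : ∀ S, IsUnitSimplex 10 S → ∑ w ∈ S, g w = c) :
    22 • ∑ w ∈ X, g w = (2 * #X) • c := by
  calc 22 • ∑ w ∈ X, g w = ∑ v ∈ X, (∑ w ∈ shell X v 1, g w + 2 • g v) := by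
        rw [Finset.sum_add_distrib, hX.sum_sum_shell_one hpair, ← Finset.smul_sum, ← add_nsmul]
    _ = ∑ _v ∈ X, 2 • c := Finset.sum_congr rfl fun v hv => by
        obtain ⟨P, Q, h⟩ := hpair v hv
        rw [← h.sum_add_sum (hX.norm_eq v hv), hg P h.left, hg Q h.right, two_nsmul]
    _ = (2 * #X) • c := by rw [Finset.sum_const, mul_comm, mul_nsmul']

theorem sum_eq_zero : ∑ w ∈ X, w = 0 := by
  have h := hX.nsmul_sum_eq_of_forall_isUnitSimplex hpair (g := fun w => w)
    fun S hS => hS.sum_eq_zero (by norm_num)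
  rw [smul_zero, ← Nat.cast_smul_eq_nsmul ℝ] at h
  exact (smul_eq_zero.1 h).resolve_left (by norm_num)

theorem sum_inner_mul_inner (hE : Module.finrank ℝ E = 10) (a b : E) :
    ∑ w ∈ X, ⟪a, w⟫ * ⟪w, b⟫ = #X / 10 * ⟪a, b⟫ := by
  have h := hX.nsmul_sum_eq_of_forall_isUnitSimplex hpair (g := fun w => ⟪a, w⟫ * ⟪w, b⟫)
    fun S hS => hS.sum_inner_mul_inner (by norm_num) hE a b
  simp only [nsmul_eq_mul] at h
  push_cast at h
  linarith

theorem card_shell (hcard : #X = 66) {u : E} (hu : u ∈ X) (i : Fin 3) :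
    #(shell X u i) = ![30, 20, 15] i := by
  have hself := hX.inner_mem_range subset_rfl hu
  have hsum := card_eq_ite_add_sum_card_shell (hX.norm_eq u hu) hself
  have hcentroid := sum_apply_inner_eq_ite_add_sum_shell (hX.norm_eq u hu) hself fun t => t
  rw [← inner_sum, hX.sum_eq_zero hpair, inner_zero_right] at hcentroid
  have hone := hX.card_shell_one hpair hu
  rw [hcard] at hsum
  rify at hsum hone
  norm_num [hu, Fin.sum_univ_three, wAngle_eq_sub_mul_val, hone] at hsum hcentroid
  have hzero : (#(shell X u 0) : ℝ) = 30 := by linarith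
  have htwo : (#(shell X u 2) : ℝ) = 15 := by linarith
  norm_cast at hzero hone htwo
  fin_cases i <;> assumption

theorem sum_card_shell_shell (hcard : #X = 66) {u : E} (hu : u ∈ X) (hv : v ∈ X) {k : Fin 3}
    (huv : ⟪u, v⟫ = wAngle k) (i : Fin 3) :
    ∑ j, #(shell (shell X u i) v j) + (if k = i then 1 else 0) = ![30, 20, 15] i := by
  have h := card_eq_ite_add_sum_card_shell (hX.norm_eq v hv)
    (hX.inner_mem_range (shell_subset X u i) hv)
  simp only [hX.card_shell hpair hcard hu, mem_shell, hv, huv, wAngle_injective.eq_iff,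
    true_and] at h
  rw [h, add_comm]

theorem sum_card_shell_shell_mul_index (hE : Module.finrank ℝ E = 10) (hcard : #X = 66) {u : E}
    (hu : u ∈ X) (hv : v ∈ X) {k : Fin 3} (huv : ⟪u, v⟫ = wAngle k) :
    ∑ i : Fin 3, ∑ j : Fin 3, #(shell (shell X u i) v j) * (i * j : ℕ) + 14 * (k : ℕ) = 48 := by
  have h := sum_card_shell_shell_mul (hX.norm_eq u hu) (hX.norm_eq v hv) huv
    (hX.inner_mem_range subset_rfl hu) (hX.inner_mem_range subset_rfl hv)
  have hindex := sum_angleIndex_mul_angleIndex (hX.sum_eq_zero hpair) u v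
  rw [if_pos hu, if_pos hv] at h
  rw [hX.sum_inner_mul_inner hpair hE, hcard, huv, wAngle_eq_sub_mul_val] at hindex
  have h48 : ∑ i : Fin 3, ∑ j : Fin 3, #(shell (shell X u i) v j) * ((i : ℕ) * (j : ℕ) : ℝ) +
      14 * (k : ℕ) = 48 := by
    push_cast at hindex
    linarith
  exact_mod_cast h48

theorem card_shell_one_shell (hE : Module.finrank ℝ E = 10) (hv : v ∈ X) {u : E} (hu : u ∈ X)
    {k : Fin 3} (huv : ⟪u, v⟫ = wAngle k) (i : Fin 3) :
    #(shell (shell X v 1) u i) + 2 * (if k = i then 1 else 0) =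
      if k = 1 then ![6, 12, 3] i else ![12, 4, 6] i :=
  have ⟨_, _, h⟩ := hpair v hv
  h.card_shell_one_shell hX hE hv hu huv i

theorem card_shell_shell (hE : Module.finrank ℝ E = 10) (hcard : #X = 66) {u : E} (hu : u ∈ X)
    (hv : v ∈ X) {k : Fin 3} (huv : ⟪u, v⟫ = wAngle k) (i j : Fin 3) :
    #(shell (shell X u i) v j) = wP k i j := by
  have hvu := (real_inner_comm u v).trans huv
  refine eq_wP_of_sums (N := fun i j => #(shell (shell X u i) v j)) (k := k)
    (hX.sum_card_shell_shell hpair hcard hu hv huv) (fun j => ?_)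
    (hX.card_shell_one_shell hpair hE hu hv hvu) (fun i => ?_)
    (hX.sum_card_shell_shell_mul_index hpair hE hcard hu hv huv) i j
  · simp_rw [fun i => shell_comm X u v i j]
    exact hX.sum_card_shell_shell hpair hcard hv hu hvu j
  · simp_rw [shell_comm X u v i 1]
    exact hX.card_shell_one_shell hpair hE hv hu huv i

end IsThreeAngleSet

end Counting

section Configuration

theorem forall_mem_range_of_sum_ncard_eq {ι κ β : Type*} [Fintype κ] {T : Set ι} (hT : T.Finite)
    {a : κ → β} (ha : Function.Injective a) {f : ι → β}
    (h : ∑ k, {i | i ∈ T ∧ f i = a k}.ncard = T.ncard) : ∀ i ∈ T, f i ∈ Set.range a := by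
  classical
  lift T to Finset ι using hT
  have hcard (k : κ) : {i | i ∈ (T : Set ι) ∧ f i = a k}.ncard = #{i ∈ T | f i = a k} := by
    rw [← Set.ncard_coe_finset, Finset.coe_filter]
    rfl
  have hle : ∀ i ∈ T, #{k | f i = a k} ≤ 1 := fun i _ => Finset.card_le_one.2 <| by
    simp only [Finset.mem_filter_univ]
    exact fun k hk l hl => ha (hk.symm.trans hl)
  have hsum : ∑ i ∈ T, #{k | f i = a k} = ∑ _i ∈ T, 1 := by
    rw [← Finset.card_eq_sum_ones, ← Set.ncard_coe_finset, ← h]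
    simp_rw [hcard]
    exact Finset.sum_card_bipartiteAbove_eq_sum_card_bipartiteBelow fun i k => f i = a k
  intro i hi
  obtain ⟨k, hk⟩ := Finset.card_pos.1 <| Nat.lt_of_lt_of_eq Nat.zero_lt_one
    ((Finset.sum_eq_sum_iff_of_le hle).1 hsum i hi).symm
  exact ⟨k, ((Finset.mem_filter_univ k).1 hk).symm⟩

namespace IsThreeAngleSet

variable {E : Type*} [NormedAddCommGroup E] [InnerProductSpace ℝ E] {A B : Set E}

theorem union (hA : IsThreeAngleSet A) (hB : IsThreeAngleSet B)
    (hAB : ∀ u ∈ A, ∀ v ∈ B, ⟪u, v⟫ ∈ Set.range wAngle) : IsThreeAngleSet (A ∪ B) where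
  norm_eq u hu := hu.elim (hA.norm_eq u) (hB.norm_eq u)
  inner_mem := Set.pairwise_union.2 ⟨hA.inner_mem, hB.inner_mem, fun u hu v hv _ =>
    ⟨hAB u hu v hv, real_inner_comm u v ▸ hAB u hu v hv⟩⟩

theorem disjoint (hA : IsThreeAngleSet A)
    (hAB : ∀ u ∈ A, ∀ v ∈ B, ⟪u, v⟫ ∈ Set.range wAngle) : Disjoint A B :=
  Set.disjoint_left.2 fun u huA huB =>
    have ⟨i, hi⟩ := hAB u huA u huB
    wAngle_ne_one i (hi.trans (inner_self_eq_one_of_norm_eq_one (hA.norm_eq u huA)))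

end IsThreeAngleSet

variable {x : Fin 11 → EuclideanSpace ℝ (Fin 10)} {C2 Z1 : Set (EuclideanSpace ℝ (Fin 10))}

namespace IsRegularSimplex

theorem injective (hx : IsRegularSimplex x) : Function.Injective x := by
  intro i j hij
  by_contra hne
  have h := hx.2 i j hne
  rw [hij, inner_self_eq_one_of_norm_eq_one (hx.1 j)] at h
  norm_num at h

theorem isUnitSimplex (hx : IsRegularSimplex x) : IsUnitSimplex 10 (Finset.univ.image x) where
  card_eq := by rw [Finset.card_image_of_injective _ hx.injective, Finset.card_fin]
  norm_eq := by simpa using hx.1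
  inner_eq := by
    simp only [Finset.coe_image, Finset.coe_univ, Set.image_univ]
    rintro _ ⟨i, rfl⟩ _ ⟨j, rfl⟩ hij
    exact_mod_cast hx.2 i j (ne_of_apply_ne x hij)

theorem isThreeAngleSet (hx : IsRegularSimplex x) : IsThreeAngleSet (Set.range x) where
  norm_eq := Set.forall_mem_range.2 hx.1
  inner_mem := by
    rintro _ ⟨i, rfl⟩ _ ⟨j, rfl⟩ hij
    exact ⟨1, (hx.2 i j (ne_of_apply_ne x hij)).symm⟩

theorem ncard_range (hx : IsRegularSimplex x) : (Set.range x).ncard = 11 := by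
  rw [← Set.image_univ, Set.ncard_image_of_injective _ hx.injective, Set.ncard_univ,
    Nat.card_fin]

end IsRegularSimplex

theorem inner_mem_range_of_mem_Y1set {y : EuclideanSpace ℝ (Fin 10)} (hy : y ∈ Y1set x)
    (i : Fin 11) : ⟪x i, y⟫ ∈ Set.range wAngle := by
  obtain ⟨-, h0, h1, h2, h3⟩ := hy
  rcases eq_or_ne i 0 with rfl | hi
  · exact ⟨1, h0.symm⟩
  have hcard : ({0}ᶜ : Set (Fin 11)).ncard = 10 := by
    rw [Set.ncard_compl, Nat.card_fin, Set.ncard_singleton]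
  refine forall_mem_range_of_sum_ncard_eq (T := {0}ᶜ) (f := fun i => ⟪x i, y⟫) (Set.toFinite _)
    wAngle_injective ?_ i hi
  rw [hcard, Fin.sum_univ_three]
  exact congr_arg₂ _ (congr_arg₂ _ h1 h2) h3

theorem inner_mem_range_of_mem_Yset {u : EuclideanSpace ℝ (Fin 10)} (hu : u ∈ Yset x C2)
    (i : Fin 11) : ⟪x i, u⟫ ∈ Set.range wAngle := by
  obtain ⟨-, -, h1, h2, h3⟩ := hu
  refine forall_mem_range_of_sum_ncard_eq (f := fun i => ⟪x i, u⟫) Set.finite_univ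
    wAngle_injective ?_ i trivial
  simp only [Set.mem_univ, true_and]
  rw [Set.ncard_univ, Nat.card_fin, Fin.sum_univ_three]
  exact congr_arg₂ _ (congr_arg₂ _ h1 h2) h3

theorem IsClique10.isThreeAngleSet (hC2 : IsClique10 x C2) : IsThreeAngleSet C2 where
  norm_eq _ hy := (hC2.1 hy).1
  inner_mem y hy y' hy' hne := ⟨1, (hC2.2.2 y hy y' hy' hne).symm⟩

theorem isThreeAngleSet_of_subset_Zset (hZ1 : Z1 ⊆ Zset x C2)
    (hin : ∀ u ∈ Z1, ∀ v ∈ Z1, u ≠ v → ⟪u, v⟫ ∈ ({α1, α2, α3} : Set ℝ)) :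
    IsThreeAngleSet Z1 where
  norm_eq _ hu := (hZ1 hu).1.1
  inner_mem := by
    rw [range_wAngle]
    exact fun u hu v hv => hin u hu v hv

theorem inner_mem_range_of_mem_range_of_mem_clique (hC2 : IsClique10 x C2) :
    ∀ u ∈ Set.range x, ∀ v ∈ C2, ⟪u, v⟫ ∈ Set.range wAngle := by
  rintro _ ⟨i, rfl⟩ v hv
  exact inner_mem_range_of_mem_Y1set (hC2.1 hv) i

theorem inner_mem_range_of_mem_union_of_mem_Zset :
    ∀ u ∈ Set.range x ∪ C2, ∀ v ∈ Zset x C2, ⟪u, v⟫ ∈ Set.range wAngle := by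
  rintro _ (⟨i, rfl⟩ | hu) v hv
  · exact inner_mem_range_of_mem_Yset hv.1 i
  · rw [range_wAngle, real_inner_comm]
    exact hv.2 _ hu

theorem isThreeAngleSet_range_union (hx : IsRegularSimplex x) (hC2 : IsClique10 x C2) :
    IsThreeAngleSet (Set.range x ∪ C2) :=
  hx.isThreeAngleSet.union hC2.isThreeAngleSet (inner_mem_range_of_mem_range_of_mem_clique hC2)

theorem isThreeAngleSet_range_union_union (hx : IsRegularSimplex x) (hC2 : IsClique10 x C2)
    (hZ1 : Z1 ⊆ Zset x C2)
    (hin : ∀ u ∈ Z1, ∀ v ∈ Z1, u ≠ v → ⟪u, v⟫ ∈ ({α1, α2, α3} : Set ℝ)) :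
    IsThreeAngleSet (Set.range x ∪ C2 ∪ Z1) :=
  (isThreeAngleSet_range_union hx hC2).union (isThreeAngleSet_of_subset_Zset hZ1 hin)
    fun u hu v hv => inner_mem_range_of_mem_union_of_mem_Zset u hu v (hZ1 hv)

theorem ncard_range_union_union (hx : IsRegularSimplex x) (hC2 : IsClique10 x C2)
    (hZ1 : Z1 ⊆ Zset x C2) (hcard : Z1.ncard = 45) : (Set.range x ∪ C2 ∪ Z1).ncard = 66 := by
  have hC2fin : C2.Finite := Set.finite_of_ncard_ne_zero (by simp [hC2.2.1])
  have hZ1fin : Z1.Finite := Set.finite_of_ncard_ne_zero (by simp [hcard])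
  have hC2disj := hx.isThreeAngleSet.disjoint (inner_mem_range_of_mem_range_of_mem_clique hC2)
  have hZ1disj := (isThreeAngleSet_range_union hx hC2).disjoint fun u hu v hv =>
    inner_mem_range_of_mem_union_of_mem_Zset u hu v (hZ1 hv)
  rw [Set.ncard_union_eq hZ1disj ((Set.finite_range x).union hC2fin) hZ1fin,
    Set.ncard_union_eq hC2disj (Set.finite_range x) hC2fin, hx.ncard_range, hC2.2.1, hcard]

theorem ncard_setOf_inner_eq {E : Type*} [NormedAddCommGroup E] [InnerProductSpace ℝ E]
    (X : Finset E) (u : E) (i : Fin 3) :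
    {v | v ∈ (X : Set E) ∧ ⟪u, v⟫ = wAngle i}.ncard = #(shell X u i) := by
  rw [← Set.ncard_coe_finset, shell, Finset.coe_filter]
  rfl

theorem ncard_setOf_inner_eq_and_inner_eq {E : Type*} [NormedAddCommGroup E]
    [InnerProductSpace ℝ E] (X : Finset E) (u v : E) (i j : Fin 3) :
    {w | w ∈ (X : Set E) ∧ ⟪u, w⟫ = wAngle i ∧ ⟪w, v⟫ = wAngle j}.ncard =
      #(shell (shell X u i) v j) := by
  simp_rw [fun w => real_inner_comm v w]
  rw [← ncard_setOf_inner_eq]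
  simp only [Finset.mem_coe, mem_shell, and_assoc]

theorem isWConfig_of_simplex_clique_Z1_general (hx : IsRegularSimplex x)
    {X : Set (EuclideanSpace ℝ (Fin 10))} (hxX : Set.range x ⊆ X) (hcard : X.ncard = 66)
    (hX : IsThreeAngleSet X) : IsWConfig X := by
  classical
  lift X to Finset (EuclideanSpace ℝ (Fin 10)) using
    Set.finite_of_ncard_ne_zero (by simp [hcard])
  have hE : Module.finrank ℝ (EuclideanSpace ℝ (Fin 10)) = 10 := finrank_euclideanSpace_fin
  have hcard' : #X = 66 := (Set.ncard_coe_finset X).symm.trans hcard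
  have hSX : Finset.univ.image x ⊆ X := by
    rwa [← Finset.coe_subset, Finset.coe_image, Finset.coe_univ, Set.image_univ]
  have hpair : ∀ v ∈ X, ∃ P Q, IsSimplexPair X v P Q := fun v hv =>
    hX.exists_isSimplexPair hSX hx.isUnitSimplex hE hcard' hv
  have hvalency : ∀ u ∈ X, ∀ i,
      {v | v ∈ (X : Set _) ∧ ⟪u, v⟫ = wAngle i}.ncard = ![30, 20, 15] i := fun u hu i =>
    (ncard_setOf_inner_eq X u i).trans (hX.card_shell hpair hcard' hu i)
  refine ⟨hcard, hX.norm_eq, ?_, fun u hu => ⟨hvalency u hu 0, hvalency u hu 1, hvalency u hu 2⟩,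
    fun u hu v hv _ k i j huv => ?_⟩
  · rw [← range_wAngle]
    exact fun u hu v hv => hX.inner_mem hu hv
  · rw [ncard_setOf_inner_eq_and_inner_eq, hX.card_shell_shell hpair hE hcard' hu hv huv]

end Configuration

end

/-- If `C2` is a clique of order 10 in the graph on `Y1` and `Z1` is a
45-element subset of `Z` with all pairwise inner products of distinct elements
in `{α1, α2, α3}`, then `C1 ∪ C2 ∪ Z1` is a `W`-configuration. -/
theorem isWConfig_of_simplex_clique_Z1 (x : Fin 11 → EuclideanSpace ℝ (Fin 10))
    (hx : IsRegularSimplex x)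
    (C2 : Set (EuclideanSpace ℝ (Fin 10))) (hC2 : IsClique10 x C2)
    (Z1 : Set (EuclideanSpace ℝ (Fin 10))) (hZ1 : Z1 ⊆ Zset x C2)
    (hcard : Z1.ncard = 45)
    (hin : ∀ u ∈ Z1, ∀ v ∈ Z1, u ≠ v → ⟪u, v⟫ ∈ ({α1, α2, α3} : Set ℝ)) :
    IsWConfig (Set.range x ∪ C2 ∪ Z1) :=
  isWConfig_of_simplex_clique_Z1_general hx
    (Set.subset_union_left.trans Set.subset_union_left)
    (ncard_range_union_union hx hC2 hZ1 hcard) (isThreeAngleSet_range_union_union hx hC2 hZ1 hin)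
end
end
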